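/- arXiv:1401.4752 — 6 statements merged into one kernel-verified Lean document; each statement's English description precedes it below -/
import Mathlib

section
/- Uniqueness of Schlesinger transforms: if R and R~ are both Schlesinger transforms of Γ subordinated to the same data (𝒜, ℬ, {L_a}, {K_b}), then R(z) = R~(z) for all z. -/
/-!
The quotient `Q = R' R⁻¹` is analytic off the finite set `𝒞`. Near a finite `c ∈ 𝒞` it factors as
`Q = (R' Γ z_c^E) (z_c^{-E} Γ⁻¹ R⁻¹)` with `E = K_c - L_c`; both factors extend analytically to `c`,
so every singularity of `Q` is removable (`extAt_quotient`). The same factorization holds at `∞`: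
there `R' Γ z_∞^E → 1`, and `z_∞^{-E} Γ⁻¹ R⁻¹` has a limit `M` because it extends analytically.
Its product with `R Γ z_∞^E → 1` is identically `1`, so `M = 1` and `Q → 1`
(`tendsto_quotient`). Liouville's theorem, applied to the entries of `Q`
(`eq_of_extAt_of_tendsto`), gives `Q = 1`.
-/

open Filter Asymptotics

noncomputable section

/-- Square `N × N` complex matrices. -/
abbrev Mat (N : ℕ) := Matrix (Fin N) (Fin N) ℂ

/-- The local coordinate `z_c` at a point `c` of the Riemann sphere
(`none` stands for `∞`): `z_c = z - c` for finite `c`, `z_∞ = 1/z`. -/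
def zloc (c : Option ℂ) (z : ℂ) : ℂ :=
  Option.elim c z⁻¹ (fun c₀ => z - c₀)

/-- The diagonal matrix `z_c^{E}` with diagonal integer exponents `E`. -/
def Dm {N : ℕ} (E : Fin N → ℤ) (c : Option ℂ) (z : ℂ) : Mat N :=
  Matrix.diagonal fun μ => (zloc c z) ^ (E μ)

/-- `f` extends analytically to the point `c`. -/
def ExtAt (f : ℂ → ℂ) (c : ℂ) : Prop :=
  ∃ g : ℂ → ℂ, AnalyticAt ℂ g c ∧ ∀ᶠ z in nhdsWithin c {c}ᶜ, g z = f z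

/-- A matrix-valued function extends analytically (entrywise) to a point of the
Riemann sphere; at `∞` this is understood in the local coordinate `1/z`. -/
def MatExtAt {N : ℕ} (F : ℂ → Mat N) (c : Option ℂ) : Prop :=
  Option.elim c (∀ i j : Fin N, ExtAt (fun w => F w⁻¹ i j) 0)
    (fun c₀ => ∀ i j : Fin N, ExtAt (fun z => F z i j) c₀)

/-- A matrix-valued function is analytic (entrywise) at a point of the Riemann
sphere; at `∞` this means analytic extendability in the coordinate `1/z`. -/
def MatAnalyticAt {N : ℕ} (F : ℂ → Mat N) (c : Option ℂ) : Prop :=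
  Option.elim c (∀ i j : Fin N, ExtAt (fun w => F w⁻¹ i j) 0)
    (fun c₀ => ∀ i j : Fin N, AnalyticAt ℂ (fun z => F z i j) c₀)

/-- `F(z) = 1 + O(z⁻¹)` as `z → ∞` (entrywise). -/
def OneBigO {N : ℕ} (F : ℂ → Mat N) : Prop :=
  ∀ i j : Fin N, (fun z => F z i j - (1 : Mat N) i j) =O[Bornology.cobounded ℂ] fun z => z⁻¹

/-- The combinatorial data of a Schlesinger transformation: two finite subsets
`𝒜 = A`, `ℬ = B` of the Riemann sphere `ℂ ∪ {∞}` (`Option ℂ`, with `none = ∞`),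
and diagonal nonnegative integer exponents `L_a` (for `a ∈ 𝒜`) and `K_b`
(for `b ∈ ℬ`), supported on `𝒜` resp. `ℬ`, satisfying the zero-index condition
`Σ_b Tr K_b = Σ_a Tr L_a` and `K_c L_c = 0` for every `c`. -/
structure SchlesingerData (N : ℕ) where
  A : Finset (Option ℂ)
  B : Finset (Option ℂ)
  L : Option ℂ → Fin N → ℕ
  K : Option ℂ → Fin N → ℕ
  L_supp : ∀ c ∉ A, L c = 0
  K_supp : ∀ c ∉ B, K c = 0
  zero_index : ∑ b ∈ B, ∑ ν, K b ν = ∑ a ∈ A, ∑ μ, L a μ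
  KL_disjoint : ∀ c, ∀ μ, K c μ * L c μ = 0

namespace SchlesingerData

variable {N : ℕ}

/-- The diagonal exponent `K_c - L_c` at the point `c`. -/
def E (d : SchlesingerData N) (c : Option ℂ) : Fin N → ℤ :=
  fun μ => (d.K c μ : ℤ) - (d.L c μ : ℤ)

/-- The set `𝒞 ∪ {∞}`. -/
def Cinf (d : SchlesingerData N) : Finset (Option ℂ) :=
  insert none (d.A ∪ d.B)

end SchlesingerData

/-- The germ hypotheses on `Γ`: `Γ` and its inverse `Γinv` are analytic near each
point of `𝒞 ∪ {∞}` (at `∞` in the coordinate `1/z`), they are mutually inverse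
near those points, and `Γ(z) = 1 + O(z⁻¹)` as `z → ∞`. -/
structure GammaGerm {N : ℕ} (d : SchlesingerData N) (Γ Γinv : ℂ → Mat N) : Prop where
  analytic : ∀ c ∈ d.Cinf, MatAnalyticAt Γ c
  analytic_inv : ∀ c ∈ d.Cinf, MatAnalyticAt Γinv c
  mul_inv : ∀ c : ℂ, some c ∈ d.A ∪ d.B → ∀ᶠ z in nhds c, Γ z * Γinv z = 1
  mul_inv_infty : ∀ᶠ z in Bornology.cobounded ℂ, Γ z * Γinv z = 1
  normalized : OneBigO Γ

/-- `R` (with pointwise inverse `Rinv`) is the Schlesinger transform of `Γ`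
subordinated to the data `d`:
(i) `R` and `R⁻¹` are analytic on `ℂ ∖ 𝒞`;
(ii) near each `c ∈ 𝒞 ∪ {∞}` the function `R(z)Γ(z)·z_c^{K_c-L_c}` together
with its inverse extends analytically to `c`;
(iii) `R(z)Γ(z)·z_∞^{K_∞-L_∞} = 1 + O(z⁻¹)` as `z → ∞`. -/
structure IsSchlesingerTransform {N : ℕ} (d : SchlesingerData N)
    (Γ Γinv R Rinv : ℂ → Mat N) : Prop where
  analyticR : ∀ z : ℂ, some z ∉ d.A ∪ d.B → ∀ i j : Fin N, AnalyticAt ℂ (fun w => R w i j) z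
  analyticRinv : ∀ z : ℂ, some z ∉ d.A ∪ d.B → ∀ i j : Fin N, AnalyticAt ℂ (fun w => Rinv w i j) z
  mul_inv : ∀ z : ℂ, some z ∉ d.A ∪ d.B → R z * Rinv z = 1 ∧ Rinv z * R z = 1
  extends_at : ∀ c ∈ d.Cinf, MatExtAt (fun z => R z * Γ z * Dm (d.E c) c z) c
  extends_at_inv : ∀ c ∈ d.Cinf,
    MatExtAt (fun z => Dm (fun μ => -(d.E c μ)) c z * Γinv z * Rinv z) c
  normalized : OneBigO (fun z => R z * Γ z * Dm (d.E none) none z)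

theorem ExtAt.congr {f g : ℂ → ℂ} {c : ℂ} (hf : ExtAt f c)
    (h : ∀ᶠ z in nhdsWithin c {c}ᶜ, f z = g z) : ExtAt g c := by
  obtain ⟨F, hF, hFf⟩ := hf
  exact ⟨F, hF, by filter_upwards [hFf, h] with z h1 h2 using h1.trans h2⟩

theorem ExtAt.mul {f g : ℂ → ℂ} {c : ℂ} (hf : ExtAt f c) (hg : ExtAt g c) :
    ExtAt (fun z => f z * g z) c := by
  obtain ⟨F, hF, hFf⟩ := hf
  obtain ⟨G, hG, hGg⟩ := hg
  exact ⟨F * G, hF.mul hG, by filter_upwards [hFf, hGg] with z h1 h2 using by simp [h1, h2]⟩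

theorem ExtAt.sum {ι : Type*} (s : Finset ι) {f : ι → ℂ → ℂ} {c : ℂ}
    (hf : ∀ i ∈ s, ExtAt (f i) c) : ExtAt (fun z => ∑ i ∈ s, f i z) c := by
  classical
  induction s using Finset.induction_on with
  | empty => exact ⟨fun _ => 0, analyticAt_const, by simp⟩
  | insert a s ha ih =>
    obtain ⟨F, hF, hFf⟩ := hf a (Finset.mem_insert_self a s)
    obtain ⟨G, hG, hGg⟩ := ih fun i hi => hf i (Finset.mem_insert_of_mem hi)
    refine ⟨F + G, hF.add hG, ?_⟩
    filter_upwards [hFf, hGg] with z h1 h2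
    simp [h1, h2, Finset.sum_insert ha]

/-- Liouville's theorem with finitely many removable singularities: a function analytic off a
finite set `S`, extending analytically to each point of `S` and tending to `a` at infinity,
equals `a` off `S`. -/
theorem eq_of_extAt_of_tendsto {S : Set ℂ} (hS : S.Finite) {f : ℂ → ℂ} {a : ℂ}
    (hf : ∀ z ∉ S, AnalyticAt ℂ f z) (hS' : ∀ z ∈ S, ExtAt f z)
    (hlim : Tendsto f (Bornology.cobounded ℂ) (nhds a)) : ∀ z ∉ S, f z = a := by
  classical
  have hext : ∀ z, ExtAt f z := fun z => by
    by_cases hz : z ∈ S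
    · exact hS' z hz
    · exact ⟨f, hf z hz, Eventually.of_forall fun _ => rfl⟩
  choose F hF hFf using hext
  -- `f` with its values on `S` replaced by those of its analytic extensions
  let g : ℂ → ℂ := fun z => if z ∈ S then F z z else f z
  have hgf : ∀ z ∉ S, g z = f z := fun z hz => if_neg hz
  have hdiff : Differentiable ℂ g := by
    intro z
    have hpunct : ∀ᶠ w in nhdsWithin z {z}ᶜ, w ∉ S := by
      have h1 : (S \ {z})ᶜ ∈ nhds z :=
        (hS.subset Set.sdiff_subset).isClosed.isOpen_compl.mem_nhds (by simp)
      filter_upwards [mem_nhdsWithin_of_mem_nhds h1, self_mem_nhdsWithin] with w hw hwz hwS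
      exact hw ⟨hwS, hwz⟩
    have hne : ∀ᶠ w in nhdsWithin z {z}ᶜ, F z w = g w := by
      filter_upwards [hpunct, hFf z] with w hw h using h.trans (hgf w hw).symm
    have hat : F z z = g z := by
      by_cases hz : z ∈ S
      · exact (if_pos hz).symm
      · rw [hgf z hz]
        exact tendsto_nhds_unique
          ((hF z).continuousAt.tendsto.mono_left nhdsWithin_le_nhds)
          (((hf z hz).continuousAt.tendsto.mono_left nhdsWithin_le_nhds).congr'
            ((hFf z).mono fun _ h => h.symm))
    have hall : ∀ᶠ w in nhds z, F z w = g w := by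
      filter_upwards [eventually_nhdsWithin_iff.1 hne] with w hw
      by_cases h : w = z
      · rw [h, hat]
      · exact hw h
    exact ((hF z).congr hall).differentiableAt
  have hglim : Tendsto g (cocompact ℂ) (nhds a) := by
    rw [← Metric.cobounded_eq_cocompact]
    refine hlim.congr' ?_
    filter_upwards [Bornology.isBounded_def.1 hS.isBounded] with z hz using (hgf z hz).symm
  intro z hz
  rw [← hgf z hz]
  exact hdiff.apply_eq_of_tendsto_cocompact z hglim

theorem Dm_mul_Dm_neg {N : ℕ} (E : Fin N → ℤ) (c : Option ℂ) (z : ℂ) (hz : zloc c z ≠ 0) :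
    Dm E c z * Dm (fun μ => -(E μ)) c z = 1 := by
  rw [Dm, Dm, Matrix.diagonal_mul_diagonal, ← Matrix.diagonal_one]
  congr 1
  funext μ
  rw [zpow_neg, mul_inv_cancel₀ (zpow_ne_zero _ hz)]

/-- The pointwise factorization of `R * Rinv` through `Γ` and `z_c^E`. The matrices `R` and `Rinv`
are not assumed inverse to each other, as they may come from different transforms. -/
theorem dressed_mul {N : ℕ} {Γ Γinv R Rinv : Mat N} (E : Fin N → ℤ) (c : Option ℂ) (z : ℂ)
    (hz : zloc c z ≠ 0) (hΓ : Γ * Γinv = 1) :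
    (R * Γ * Dm E c z) * (Dm (fun μ => -(E μ)) c z * Γinv * Rinv) = R * Rinv := by
  calc _ = R * (Γ * (Dm E c z * Dm (fun μ => -(E μ)) c z) * Γinv) * Rinv := by
        simp only [Matrix.mul_assoc]
    _ = R * Rinv := by rw [Dm_mul_Dm_neg E c z hz, Matrix.mul_one, hΓ, Matrix.mul_one]

theorem OneBigO.tendsto {N : ℕ} {F : ℂ → Mat N} (hF : OneBigO F) :
    Tendsto F (Bornology.cobounded ℂ) (nhds 1) := by
  refine tendsto_pi_nhds.2 fun i => tendsto_pi_nhds.2 fun j => ?_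
  have h := (hF i j).trans_tendsto tendsto_inv₀_cobounded
  simpa using h.add_const ((1 : Mat N) i j)

theorem MatExtAt.exists_tendsto {N : ℕ} {F : ℂ → Mat N} (hF : MatExtAt F none) :
    ∃ M, Tendsto F (Bornology.cobounded ℂ) (nhds M) := by
  have hF' : ∀ i j : Fin N, ExtAt (fun w => F w⁻¹ i j) 0 := hF
  choose G hG hGF using hF'
  refine ⟨Matrix.of fun i j => G i j 0, tendsto_pi_nhds.2 fun i => tendsto_pi_nhds.2 fun j => ?_⟩
  have h1 : Tendsto (fun w => F w⁻¹ i j) (nhdsWithin 0 {0}ᶜ) (nhds (G i j 0)) :=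
    ((hG i j).continuousAt.tendsto.mono_left nhdsWithin_le_nhds).congr' (hGF i j)
  simpa [Function.comp_def] using h1.comp tendsto_inv₀_cobounded'

section Quotient

variable {N : ℕ} {d : SchlesingerData N} {Γ Γinv R Rinv R' R'inv : ℂ → Mat N}

/-- The singularities of `R' R⁻¹` at the finite points of `𝒞` are removable. -/
theorem extAt_quotient (hΓ : GammaGerm d Γ Γinv)
    (hR : IsSchlesingerTransform d Γ Γinv R Rinv)
    (hR' : IsSchlesingerTransform d Γ Γinv R' R'inv) {c : ℂ} (hc : some c ∈ d.A ∪ d.B)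
    (i j : Fin N) : ExtAt (fun z => (R' z * Rinv z) i j) c := by
  have hc' : some c ∈ d.Cinf := Finset.mem_insert_of_mem hc
  have h1 : ∀ i j, ExtAt (fun z => (R' z * Γ z * Dm (d.E (some c)) (some c) z) i j) c :=
    hR'.extends_at _ hc'
  have h2 : ∀ i j, ExtAt (fun z =>
      (Dm (fun μ => -(d.E (some c) μ)) (some c) z * Γinv z * Rinv z) i j) c :=
    hR.extends_at_inv _ hc'
  refine (ExtAt.sum Finset.univ fun k _ => (h1 i k).mul (h2 k j)).congr ?_
  filter_upwards [mem_nhdsWithin_of_mem_nhds (hΓ.mul_inv c hc), self_mem_nhdsWithin] with z hz hzc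
  rw [← dressed_mul (R := R' z) (Rinv := Rinv z) (d.E (some c)) (some c) z (sub_ne_zero.2 hzc) hz]
  exact (Matrix.mul_apply ..).symm

/-- `R' R⁻¹` tends to the identity at infinity. -/
theorem tendsto_quotient (hΓ : GammaGerm d Γ Γinv)
    (hR : IsSchlesingerTransform d Γ Γinv R Rinv)
    (hR' : IsSchlesingerTransform d Γ Γinv R' R'inv)
    (hfin : {z : ℂ | some z ∈ d.A ∪ d.B}.Finite) :
    Tendsto (fun z => R' z * Rinv z) (Bornology.cobounded ℂ) (nhds 1) := by
  obtain ⟨M, hM⟩ := (hR.extends_at_inv none (Finset.mem_insert_self _ _)).exists_tendsto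
  have hne : ∀ᶠ z : ℂ in Bornology.cobounded ℂ, zloc none z ≠ 0 := by
    filter_upwards [Bornology.isBounded_def.1 (Bornology.isBounded_singleton (x := (0 : ℂ)))] with z hz
    exact inv_ne_zero hz
  have hone := hR.normalized.tendsto.mul hM
  have hquot := hR'.normalized.tendsto.mul hM
  have hM1 : M = 1 := by
    rw [one_mul] at hone
    refine tendsto_nhds_unique hone (tendsto_const_nhds.congr' ?_)
    filter_upwards [hne, hΓ.mul_inv_infty, Bornology.isBounded_def.1 hfin.isBounded] with z hz hz' hzS
    rw [dressed_mul _ _ _ hz hz', (hR.mul_inv z hzS).1]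
  rw [hM1, one_mul] at hquot
  refine hquot.congr' ?_
  filter_upwards [hne, hΓ.mul_inv_infty] with z hz hz'
  rw [dressed_mul _ _ _ hz hz']

end Quotient

/-- **Uniqueness of Schlesinger transforms.** If `R` and `R̃` are both Schlesinger
transforms of `Γ` subordinated to the same data `(𝒜, ℬ, {L_a}, {K_b})`, then
`R(z) = R̃(z)` (for all `z`, i.e. wherever the transforms are constrained,
namely away from the finitely many points of `𝒞 = 𝒜 ∪ ℬ`). -/
theorem schlesinger_transform_unique {N : ℕ} (hN : 1 ≤ N)
    (d : SchlesingerData N) (Γ Γinv R Rinv R' R'inv : ℂ → Mat N)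
    (hΓ : GammaGerm d Γ Γinv)
    (hR : IsSchlesingerTransform d Γ Γinv R Rinv)
    (hR' : IsSchlesingerTransform d Γ Γinv R' R'inv) :
    ∀ z : ℂ, some z ∉ d.A ∪ d.B → R z = R' z := by
  have hfin : {z : ℂ | some z ∈ d.A ∪ d.B}.Finite :=
    (d.A ∪ d.B).finite_toSet.preimage (Option.some_injective ℂ).injOn
  have hlim := tendsto_quotient hΓ hR hR' hfin
  intro z hz
  have hQ : R' z * Rinv z = 1 := by
    ext i j
    refine eq_of_extAt_of_tendsto (f := fun z => (R' z * Rinv z) i j) hfin (fun w hw => ?_)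
      (fun w hw => extAt_quotient hΓ hR hR' hw i j)
      (tendsto_pi_nhds.1 (tendsto_pi_nhds.1 hlim i) j) z hz
    simp only [Matrix.mul_apply]
    exact Finset.analyticAt_fun_sum _ fun k _ =>
      (hR'.analyticR w hw i k).mul (hR.analyticRinv w hw k j)
  calc R z = R' z * Rinv z * R z := by rw [hQ, Matrix.one_mul]
    _ = R' z := by rw [Matrix.mul_assoc, (hR.mul_inv z hz).2, Matrix.mul_one]

end
end

section
/- Determinant of a Schlesinger transform: if R is a Schlesinger transform of Γ subordinated to the data (𝒜, ℬ, {L_a}, {K_b}), then for all z one has det R(z) = ∏_{μ=1}^{N} [ ∏_{a ∈ 𝒜, a ≠ ∞} (z − a)^{ℓ_{a,μ}} / ∏_{b ∈ ℬ, b ≠ ∞} (z − b)^{k_{b,μ}} ]. -/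
/-! The determinant of a Schlesinger transform is found by Liouville's theorem. Write
`e c = Tr (K_c - L_c)` and consider `f z = det R(z) * ∏ (z - c) ^ e c`, the product running over
the finite points of `𝒞`. Away from `𝒞` it is analytic; at a point `c ∈ 𝒞` the factor
`det R(z) * (z - c) ^ e c` equals `det (R Γ z_c^{K_c - L_c}) * det Γ⁻¹` near `c`, so the singularity
is removable (`detFactor_extAt`). At `∞` the zero-index condition says that the exponents, with
that of `∞` included, add up to zero, so the normalizations of `R Γ z_∞^{K_∞ - L_∞}` and of `Γ`
give `f → 1` (`tendsto_f`). Hence `f` is constant and equal to `1`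
(`eq_one_of_removable`), and solving for `det R` gives the formula. -/

open Filter Asymptotics

noncomputable section

/-- Liouville's theorem for a function with finitely many removable singularities. -/
lemma eq_one_of_removable {f : ℂ → ℂ} {S : Set ℂ} (hS : S.Finite)
    (hext : ∀ c, ExtAt f c) (hf : ∀ z ∉ S, ContinuousAt f z)
    (hlim : Tendsto f (Bornology.cobounded ℂ) (nhds 1)) : ∀ z ∉ S, f z = 1 := by
  choose g hga hgf using hext
  -- `g c` extends `f` near `c`, so the diagonal `z ↦ g z z` fills in all the singularities.
  have key : ∀ z, (fun w => g w w) =ᶠ[nhds z] g z := by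
    intro z
    have h1 := eventually_eventually_nhds.2 (eventually_nhdsWithin_iff.1 (hgf z))
    have h2 := (hga z).eventually_analyticAt
    have h3 : ∀ᶠ w in nhds z, w ≠ z → g z =ᶠ[nhds w] f := by
      filter_upwards [h1] with w hw hwz
      filter_upwards [hw, isOpen_ne.mem_nhds hwz] with x hx hxz using hx hxz
    filter_upwards [h2, h3] with w hw2 hw3
    by_cases hwz : w = z
    · rw [hwz]
    · have : g w =ᶠ[nhdsWithin w {w}ᶜ] g z :=
        EventuallyEq.trans (hgf w) ((hw3 hwz).filter_mono nhdsWithin_le_nhds).symm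
      exact ((hga w).continuousAt.eventuallyEq_nhds_iff_eventuallyEq_nhdsNE
        hw2.continuousAt).1 this |>.eq_of_nhds
  have hdiff : Differentiable ℂ (fun w => g w w) := fun z =>
    ((hga z).congr (key z).symm).differentiableAt
  have heq : ∀ z ∉ S, g z z = f z := fun z hz =>
    (((hga z).continuousAt.eventuallyEq_nhds_iff_eventuallyEq_nhdsNE (hf z hz)).1
      (hgf z)).eq_of_nhds
  have hlim' : Tendsto (fun w => g w w) (cocompact ℂ) (nhds 1) := by
    rw [← Metric.cobounded_eq_cocompact]
    refine hlim.congr' ?_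
    have : Sᶜ ∈ Bornology.cobounded ℂ := hS.isBounded
    filter_upwards [this] with z hz using (heq z hz).symm
  intro z hz
  rw [← heq z hz]
  exact hdiff.apply_eq_of_tendsto_cocompact z hlim'

lemma analyticAt_det {N : ℕ} {F : ℂ → Mat N} {c : ℂ}
    (h : ∀ i j, AnalyticAt ℂ (fun z => F z i j) c) : AnalyticAt ℂ (fun z => (F z).det) c := by
  simp only [Matrix.det_apply']
  refine Finset.analyticAt_fun_sum _ fun σ _ => analyticAt_const.mul ?_
  exact Finset.analyticAt_fun_prod _ fun i _ => h _ _

lemma extAt_det {N : ℕ} {F : ℂ → Mat N} {c : ℂ}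
    (h : ∀ i j, ExtAt (fun z => F z i j) c) : ExtAt (fun z => (F z).det) c := by
  choose g hg hgf using h
  refine ⟨fun z => (Matrix.of fun i j => g i j z : Mat N).det, analyticAt_det (by simpa using hg), ?_⟩
  have : ∀ᶠ z in nhdsWithin c {c}ᶜ, ∀ i j, g i j z = F z i j :=
    eventually_all.2 fun i => eventually_all.2 fun j => hgf i j
  filter_upwards [this] with z hz
  congr 1
  ext i j
  simp [hz]

lemma OneBigO.tendsto_det {N : ℕ} {F : ℂ → Mat N} (h : OneBigO F) :
    Tendsto (fun z => (F z).det) (Bornology.cobounded ℂ) (nhds 1) := by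
  have hF : Tendsto F (Bornology.cobounded ℂ) (nhds 1) := by
    refine tendsto_pi_nhds.2 fun i => tendsto_pi_nhds.2 fun j => ?_
    have := (h i j).trans_tendsto tendsto_inv₀_cobounded
    simpa using this.add_const ((1 : Mat N) i j)
  have hc : Continuous fun M : Mat N => M.det := continuous_id.matrix_det
  simpa [Function.comp_def] using (hc.tendsto 1).comp hF

namespace SchlesingerData

variable {N : ℕ} (d : SchlesingerData N)

/-- The trace of the exponent matrix `K_c - L_c`. -/
def trE (c : Option ℂ) : ℤ := ∑ μ, d.E c μ

/-- The scalar factor `(z - c) ^ Tr (K_c - L_c)` at a finite point `c`; it is `1` at `∞`. -/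
def detFactor (c : Option ℂ) (z : ℂ) : ℂ := Option.elim c 1 fun c₀ => (z - c₀) ^ d.trE c

lemma det_Dm {c : Option ℂ} {z : ℂ} (hz : zloc c z ≠ 0) :
    (Dm (d.E c) c z).det = zloc c z ^ d.trE c := by
  simp only [Dm, Matrix.det_diagonal, trE]
  generalize zloc c z = x at *
  generalize (Finset.univ : Finset (Fin N)) = s
  induction s using Finset.induction_on with
  | empty => simp
  | insert a s ha ih => rw [Finset.prod_insert ha, Finset.sum_insert ha, zpow_add₀ hz, ih]

/-- The zero-index condition, as a single sum over `𝒞 ∪ {∞}`. -/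
lemma sum_trE : ∑ c ∈ d.Cinf, d.trE c = 0 := by
  have hK : ∑ c ∈ d.Cinf, ∑ μ, d.K c μ = ∑ b ∈ d.B, ∑ μ, d.K b μ := by
    refine (Finset.sum_subset (fun c hc => ?_) fun c _ hc => ?_).symm
    · simp [Cinf, hc]
    · simp [d.K_supp c hc]
  have hL : ∑ c ∈ d.Cinf, ∑ μ, d.L c μ = ∑ a ∈ d.A, ∑ μ, d.L a μ := by
    refine (Finset.sum_subset (fun c hc => ?_) fun c _ hc => ?_).symm
    · simp [Cinf, hc]
    · simp [d.L_supp c hc]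
  have h := hK.trans (d.zero_index.trans hL.symm)
  simp only [trE, E, Finset.sum_sub_distrib]
  rw [sub_eq_zero]
  exact_mod_cast h

lemma analyticAt_detFactor {c : Option ℂ} {z : ℂ} (h : c ≠ some z) :
    AnalyticAt ℂ (d.detFactor c) z := by
  rcases c with _ | c
  · exact analyticAt_const
  · have : z - c ≠ 0 := sub_ne_zero.2 fun h' => h (by rw [h'])
    exact (analyticAt_id.sub analyticAt_const).zpow this

lemma detFactor_ne_zero {c : Option ℂ} {z : ℂ} (h : c ≠ some z) : d.detFactor c z ≠ 0 := by
  rcases c with _ | c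
  · exact one_ne_zero
  · exact zpow_ne_zero _ (sub_ne_zero.2 fun h' => h (by rw [h']))

/-- Each finite factor is asymptotic to `z ^ Tr (K_c - L_c)` at `∞`. -/
lemma tendsto_detFactor (c : ℂ) :
    Tendsto (fun z => d.detFactor (some c) z * z⁻¹ ^ d.trE (some c))
      (Bornology.cobounded ℂ) (nhds 1) := by
  have h1 : Tendsto (fun z : ℂ => 1 - c * z⁻¹) (Bornology.cobounded ℂ) (nhds 1) := by
    simpa using (tendsto_inv₀_cobounded.const_mul c).const_sub 1
  have h2 := h1.zpow₀ (d.trE (some c)) (Or.inl one_ne_zero)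
  rw [one_zpow] at h2
  refine h2.congr' ?_
  filter_upwards [Bornology.eventually_ne_cobounded (0 : ℂ)] with z hz
  simp only [detFactor, Option.elim]
  rw [← mul_zpow]
  congr 1
  field_simp

end SchlesingerData

open SchlesingerData

/-- At a finite point of `𝒞` the function `det R(z) * (z - c) ^ Tr (K_c - L_c)` has a removable
singularity. -/
lemma detFactor_extAt {N : ℕ} {d : SchlesingerData N} {Γ Γinv R Rinv : ℂ → Mat N}
    (hΓ : GammaGerm d Γ Γinv) (hR : IsSchlesingerTransform d Γ Γinv R Rinv)
    {c : ℂ} (hc : some c ∈ d.A ∪ d.B) :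
    ExtAt (fun z => (R z).det * d.detFactor (some c) z) c := by
  have hc' : some c ∈ d.Cinf := Finset.mem_insert_of_mem hc
  obtain ⟨g, hg, hgf⟩ := extAt_det (hR.extends_at _ hc')
  have hi : AnalyticAt ℂ (fun z => (Γinv z).det) c := analyticAt_det (hΓ.analytic_inv _ hc')
  refine ⟨fun z => g z * (Γinv z).det, hg.mul hi, ?_⟩
  filter_upwards [hgf, (hΓ.mul_inv c hc).filter_mono nhdsWithin_le_nhds, self_mem_nhdsWithin]
    with z hz hz2 hzc
  have hne : zloc (some c) z ≠ 0 := sub_ne_zero.2 hzc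
  have hdet : (Γ z).det * (Γinv z).det = 1 := by rw [← Matrix.det_mul, hz2, Matrix.det_one]
  rw [hz, Matrix.det_mul, Matrix.det_mul, d.det_Dm hne]
  change _ = (R z).det * zloc (some c) z ^ d.trE (some c)
  linear_combination ((R z).det * zloc (some c) z ^ d.trE (some c)) * hdet

lemma tendsto_f {N : ℕ} {d : SchlesingerData N} {Γ Γinv R Rinv : ℂ → Mat N}
    (hΓ : GammaGerm d Γ Γinv) (hR : IsSchlesingerTransform d Γ Γinv R Rinv) :
    Tendsto (fun z => (R z).det * ∏ c ∈ d.Cinf, d.detFactor c z)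
      (Bornology.cobounded ℂ) (nhds 1) := by
  have hprod : Tendsto (fun z => ∏ c ∈ d.Cinf.erase none, (d.detFactor c z * z⁻¹ ^ d.trE c))
      (Bornology.cobounded ℂ) (nhds 1) := by
    have : Tendsto (fun z => ∏ c ∈ d.Cinf.erase none, (d.detFactor c z * z⁻¹ ^ d.trE c))
        (Bornology.cobounded ℂ) (nhds (∏ c ∈ d.Cinf.erase none, 1)) := by
      refine tendsto_finsetProd _ fun c hc => ?_
      rcases c with _ | c
      · simp at hc
      · exact d.tendsto_detFactor c
    simpa using this
  have hG := hΓ.normalized.tendsto_det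
  have h := (hR.normalized.tendsto_det.mul hprod).div hG one_ne_zero
  simp only [mul_one, div_one] at h
  refine h.congr' ?_
  filter_upwards [Bornology.eventually_ne_cobounded (0 : ℂ),
    hG.eventually_ne one_ne_zero] with z hz hGz
  have hzi : z⁻¹ ≠ 0 := inv_ne_zero hz
  have hmem : none ∈ d.Cinf := Finset.mem_insert_self _ _
  -- The powers of `z⁻¹` over all of `𝒞 ∪ {∞}` cancel by the zero-index condition.
  have hpow : z⁻¹ ^ d.trE none * ∏ c ∈ d.Cinf.erase none, z⁻¹ ^ d.trE c = 1 := by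
    rw [Finset.mul_prod_erase _ (fun c => z⁻¹ ^ d.trE c) hmem]
    have : ∀ s : Finset (Option ℂ), ∏ c ∈ s, z⁻¹ ^ d.trE c = z⁻¹ ^ ∑ c ∈ s, d.trE c := by
      intro s
      induction s using Finset.induction_on with
      | empty => simp
      | insert a s ha ih => rw [Finset.prod_insert ha, Finset.sum_insert ha, zpow_add₀ hzi, ih]
    rw [this, d.sum_trE, zpow_zero]
  have hdet : (Dm (d.E none) none z).det = z⁻¹ ^ d.trE none := d.det_Dm (c := none) hzi
  have hfac : ∏ c ∈ d.Cinf, d.detFactor c z = ∏ c ∈ d.Cinf.erase none, d.detFactor c z := by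
    rw [← Finset.mul_prod_erase _ (fun c => d.detFactor c z) hmem]
    simp [detFactor]
  simp only [Pi.div_apply]
  rw [hfac, Matrix.det_mul, Matrix.det_mul, hdet, Finset.prod_mul_distrib, div_eq_iff hGz]
  linear_combination ((R z).det * (Γ z).det * ∏ c ∈ d.Cinf.erase none, d.detFactor c z) * hpow

/-- The product of the scalar factors is the reciprocal of the asserted determinant. -/
lemma prod_detFactor {N : ℕ} (d : SchlesingerData N) {z : ℂ} (hz : some z ∉ d.A ∪ d.B) :
    (∏ μ : Fin N,
          (∏ a ∈ d.A, Option.elim a 1 (fun a₀ => (z - a₀) ^ (d.L a μ))) /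
          (∏ b ∈ d.B, Option.elim b 1 (fun b₀ => (z - b₀) ^ (d.K b μ)))) *
      ∏ c ∈ d.Cinf, d.detFactor c z = 1 := by
  have hA : ∀ μ, ∏ a ∈ d.A, Option.elim a 1 (fun a₀ => (z - a₀) ^ (d.L a μ)) =
      ∏ a ∈ d.Cinf, Option.elim a 1 (fun a₀ => (z - a₀) ^ (d.L a μ)) := by
    intro μ
    refine Finset.prod_subset (fun c hc => by simp [Cinf, hc]) fun c _ hc => ?_
    rcases c with _ | c <;> simp [d.L_supp _ hc]
  have hB : ∀ μ, ∏ b ∈ d.B, Option.elim b 1 (fun b₀ => (z - b₀) ^ (d.K b μ)) =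
      ∏ b ∈ d.Cinf, Option.elim b 1 (fun b₀ => (z - b₀) ^ (d.K b μ)) := by
    intro μ
    refine Finset.prod_subset (fun c hc => by simp [Cinf, hc]) fun c _ hc => ?_
    rcases c with _ | c <;> simp [d.K_supp _ hc]
  simp only [hA, hB]
  simp only [← Finset.prod_div_distrib]
  rw [Finset.prod_comm, ← Finset.prod_mul_distrib]
  refine Finset.prod_eq_one fun c hc => ?_
  rcases c with _ | c
  · simp [detFactor]
  · have hne : z - c ≠ 0 := by
      refine sub_ne_zero.2 fun h => hz ?_
      rw [h]
      simpa [Cinf] using hc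
    have hdet : d.detFactor (some c) z = ∏ μ, (z - c) ^ d.E (some c) μ := by
      have := d.det_Dm (c := some c) (z := z) hne
      simp only [Dm, Matrix.det_diagonal] at this
      exact this.symm
    rw [hdet, ← Finset.prod_mul_distrib]
    refine Finset.prod_eq_one fun μ _ => ?_
    simp only [Option.elim, E]
    rw [zpow_sub₀ hne, zpow_natCast, zpow_natCast]
    field_simp

/-- **Determinant of a Schlesinger transform.** If `R` is a Schlesinger transform of
`Γ` subordinated to the data `(𝒜, ℬ, {L_a}, {K_b})`, then (away from the
finitely many points of `𝒞`, where the transform is constrained)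
`det R(z) = ∏_{μ=1}^{N} ∏_{a ∈ 𝒜, a ≠ ∞} (z-a)^{ℓ_{a,μ}} / ∏_{b ∈ ℬ, b ≠ ∞} (z-b)^{k_{b,μ}}`. -/
theorem schlesinger_transform_det {N : ℕ} (hN : 1 ≤ N)
    (d : SchlesingerData N) (Γ Γinv R Rinv : ℂ → Mat N)
    (hΓ : GammaGerm d Γ Γinv)
    (hR : IsSchlesingerTransform d Γ Γinv R Rinv) :
    ∀ z : ℂ, some z ∉ d.A ∪ d.B →
      Matrix.det (R z) =
        ∏ μ : Fin N,
          (∏ a ∈ d.A, Option.elim a 1 (fun a₀ => (z - a₀) ^ (d.L a μ))) /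
          (∏ b ∈ d.B, Option.elim b 1 (fun b₀ => (z - b₀) ^ (d.K b μ))) := by
  have hfin : {z : ℂ | some z ∈ d.A ∪ d.B}.Finite :=
    (d.A ∪ d.B).finite_toSet.preimage (Option.some_injective ℂ).injOn
  have hne : ∀ {z : ℂ}, some z ∉ d.A ∪ d.B → ∀ c ∈ d.Cinf, c ≠ some z := by
    rintro z hz c hc rfl
    exact hz (by simpa [Cinf] using hc)
  have han : ∀ z : ℂ, some z ∉ d.A ∪ d.B →
      AnalyticAt ℂ (fun w => (R w).det * ∏ c ∈ d.Cinf, d.detFactor c w) z := fun z hz =>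
    (analyticAt_det (hR.analyticR z hz)).mul
      (Finset.analyticAt_fun_prod _ fun c hc => d.analyticAt_detFactor (hne hz c hc))
  have hext : ∀ z : ℂ, ExtAt (fun w => (R w).det * ∏ c ∈ d.Cinf, d.detFactor c w) z := by
    intro z
    by_cases hz : some z ∈ d.A ∪ d.B
    · obtain ⟨g, hg, hgf⟩ := detFactor_extAt hΓ hR hz
      refine ⟨fun w => g w * ∏ c ∈ d.Cinf.erase (some z), d.detFactor c w,
        hg.mul (Finset.analyticAt_fun_prod _ fun c hc =>
          d.analyticAt_detFactor (Finset.ne_of_mem_erase hc)), ?_⟩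
      filter_upwards [hgf] with w hw
      rw [hw, mul_assoc, Finset.mul_prod_erase _ (fun c => d.detFactor c w)
        (show some z ∈ d.Cinf from Finset.mem_insert_of_mem hz)]
    · exact ⟨_, han z hz, Eventually.of_forall fun _ => rfl⟩
  intro z hz
  have h1 := eq_one_of_removable hfin hext (fun z hz => (han z hz).continuousAt)
    (tendsto_f hΓ hR) z hz
  have hP : ∏ c ∈ d.Cinf, d.detFactor c z ≠ 0 :=
    Finset.prod_ne_zero_iff.2 fun c hc => d.detFactor_ne_zero (hne hz c hc)
  exact mul_right_cancel₀ hP (h1.trans (prod_detFactor d hz).symm)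


end
end

section
/- Group property of Schlesinger transformations: let R₁ be a Schlesinger transform of Γ subordinated to the data (𝒜, ℬ, {L_c}, {K_c}), and let (𝒜′, ℬ′, {L′_c}, {K′_c}) be a second admissible data set such that the combined exponents L″_c := L_c + L′_c and K″_c := K_c + K′_c still satisfy K″_c L″_c = 0 for every c and the zero-index condition. Suppose R₂ is a matrix-valued function such that R₂ and R₂^{-1} are analytic on ℂ ∖ (𝒜′ ∪ ℬ′), for each c ∈ 𝒞 ∪ 𝒞′ ∪ {∞} the function R₂(z)·[R₁(z)Γ(z)·z_c^{K_c − L_c}]·z_c^{K′_c − L′_c} and its inverse extend analytically to c, and R₂(z)·[R₁(z)Γ(z)·z_∞^{K_∞ − L_∞}]·z_∞^{K′_∞ − L′_∞} = 1 + O(z^{-1}) as z → ∞ (i.e., R₂ is a Schlesinger transform of the transformed germs for the second data set). Then the product R₂(z)R₁(z) is the Schlesinger transform of Γ subordinated to the combined data: its exponent matrices are L″_c and K″_c. -/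
/-!
Away from `z_c = 0` the diagonal factors satisfy `z_c^{E} z_c^{E'} = z_c^{E + E'}`, and the
exponent of the combined data is `E'' = E + E'`. Hence
`(R₂ R₁) Γ z_c^{E''} = R₂ (R₁ Γ z_c^{E}) z_c^{E'}` and
`z_c^{-E''} Γ⁻¹ (R₁⁻¹ R₂⁻¹) = z_c^{-E'} z_c^{-E} Γ⁻¹ R₁⁻¹ R₂⁻¹` on a punctured neighbourhood of `c`.
Analytic extendability only sees punctured neighbourhoods (`MatExtAt.congr_of_zloc_ne_zero`), so the
conditions at the points of `𝒞'' ∪ {∞}` and the normalization at `∞` pass to the product. Off `𝒞''`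
both factors are analytic and invertible, hence so is their product.
-/

open Filter Asymptotics

noncomputable section

/-- Local extendability at `c` is insensitive to the values where the local coordinate `z_c`
vanishes; this is needed because `z_c ^ n` takes a junk value there for `n < 0`. -/
lemma MatExtAt.congr_of_zloc_ne_zero {N : ℕ} {F G : ℂ → Mat N} {c : Option ℂ}
    (hF : MatExtAt F c) (h : ∀ z, zloc c z ≠ 0 → F z = G z) : MatExtAt G c := by
  cases c with
  | none =>
    intro i j
    obtain ⟨g, hg, hgF⟩ := hF i j
    refine ⟨g, hg, ?_⟩
    filter_upwards [hgF, self_mem_nhdsWithin] with w hw hw0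
    have hw0' : zloc none w⁻¹ ≠ 0 := by simpa [zloc] using hw0
    rw [hw, h _ hw0']
  | some c₀ =>
    intro i j
    obtain ⟨g, hg, hgF⟩ := hF i j
    refine ⟨g, hg, ?_⟩
    filter_upwards [hgF, self_mem_nhdsWithin] with z hz hz0
    have hz0' : zloc (some c₀) z ≠ 0 := sub_ne_zero.mpr hz0
    rw [hz, h _ hz0']

lemma Dm_mul_Dm {N : ℕ} (E E' : Fin N → ℤ) {c : Option ℂ} {z : ℂ} (hz : zloc c z ≠ 0) :
    Dm E c z * Dm E' c z = Dm (fun μ => E μ + E' μ) c z := by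
  simp only [Dm, Matrix.diagonal_mul_diagonal, zpow_add₀ hz]

lemma analyticAt_mul_entry {N : ℕ} {F G : ℂ → Mat N} {z : ℂ}
    (hF : ∀ i j : Fin N, AnalyticAt ℂ (fun w => F w i j) z)
    (hG : ∀ i j : Fin N, AnalyticAt ℂ (fun w => G w i j) z) (i j : Fin N) :
    AnalyticAt ℂ (fun w => (F w * G w) i j) z := by
  simp only [Matrix.mul_apply]
  exact Finset.analyticAt_fun_sum _ fun k _ => (hF i k).mul (hG k j)

/-- **Group property of Schlesinger transformations.** Let `R₁` be a Schlesinger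
transform of `Γ` subordinated to the data `d = (𝒜, ℬ, {L_c}, {K_c})`, and let
`d' = (𝒜′, ℬ′, {L′_c}, {K′_c})` be a second admissible data set such that the
combined exponents `L″_c = L_c + L′_c`, `K″_c = K_c + K′_c` (with point sets
`𝒜″ = 𝒜 ∪ 𝒜′`, `ℬ″ = ℬ ∪ ℬ′`) still form an admissible data set `d″` (in
particular `K″_c L″_c = 0` and the zero-index condition hold).  Suppose `R₂`
(with inverse `R₂inv`) satisfies: `R₂, R₂⁻¹` are analytic on `ℂ ∖ 𝒞′`; for each
`c ∈ 𝒞 ∪ 𝒞′ ∪ {∞}` the function `R₂(z)·[R₁(z)Γ(z)·z_c^{K_c-L_c}]·z_c^{K′_c-L′_c}`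
and its inverse extend analytically to `c`; and
`R₂(z)·[R₁(z)Γ(z)·z_∞^{K_∞-L_∞}]·z_∞^{K′_∞-L′_∞} = 1 + O(z⁻¹)` as `z → ∞`
(i.e. `R₂` is a Schlesinger transform of the transformed germs for the second
data set).  Then `R₂(z)R₁(z)` is the Schlesinger transform of `Γ` subordinated
to the combined data `d″`. -/
theorem schlesinger_transform_group {N : ℕ} (hN : 1 ≤ N)
    (d d' d'' : SchlesingerData N)
    (hA : d''.A = d.A ∪ d'.A) (hB : d''.B = d.B ∪ d'.B)
    (hL : ∀ c μ, d''.L c μ = d.L c μ + d'.L c μ)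
    (hK : ∀ c μ, d''.K c μ = d.K c μ + d'.K c μ)
    (Γ Γinv R₁ R₁inv R₂ R₂inv : ℂ → Mat N)
    (hΓ : GammaGerm d'' Γ Γinv)
    (hR₁ : IsSchlesingerTransform d Γ Γinv R₁ R₁inv)
    (hR₂an : ∀ z : ℂ, some z ∉ d'.A ∪ d'.B → ∀ i j : Fin N,
      AnalyticAt ℂ (fun w => R₂ w i j) z)
    (hR₂aninv : ∀ z : ℂ, some z ∉ d'.A ∪ d'.B → ∀ i j : Fin N,
      AnalyticAt ℂ (fun w => R₂inv w i j) z)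
    (hR₂inv : ∀ z : ℂ, some z ∉ d'.A ∪ d'.B → R₂ z * R₂inv z = 1 ∧ R₂inv z * R₂ z = 1)
    (hR₂ext : ∀ c ∈ d''.Cinf,
      MatExtAt (fun z => R₂ z * (R₁ z * Γ z * Dm (d.E c) c z) * Dm (d'.E c) c z) c)
    (hR₂extinv : ∀ c ∈ d''.Cinf,
      MatExtAt (fun z => Dm (fun μ => -(d'.E c μ)) c z * Dm (fun μ => -(d.E c μ)) c z *
        Γinv z * R₁inv z * R₂inv z) c)
    (hR₂norm : OneBigO
      (fun z => R₂ z * (R₁ z * Γ z * Dm (d.E none) none z) * Dm (d'.E none) none z)) :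
    IsSchlesingerTransform d'' Γ Γinv (fun z => R₂ z * R₁ z) (fun z => R₁inv z * R₂inv z) := by
  have hE : ∀ c μ, d''.E c μ = d.E c μ + d'.E c μ := by
    intro c μ
    simp only [SchlesingerData.E, hL, hK]
    push_cast
    ring
  have hD : ∀ c z, zloc c z ≠ 0 → Dm (d''.E c) c z = Dm (d.E c) c z * Dm (d'.E c) c z := by
    intro c z hz
    rw [Dm_mul_Dm _ _ hz, show d''.E c = fun μ => d.E c μ + d'.E c μ from funext (hE c)]
  have hDinv : ∀ c z, zloc c z ≠ 0 → Dm (fun μ => -(d''.E c μ)) c z =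
      Dm (fun μ => -(d'.E c μ)) c z * Dm (fun μ => -(d.E c μ)) c z := by
    intro c z hz
    rw [Dm_mul_Dm _ _ hz]
    congr 1
    funext μ
    rw [hE]
    ring
  have hmem : ∀ c, c ∉ d''.A ∪ d''.B → c ∉ d.A ∪ d.B ∧ c ∉ d'.A ∪ d'.B := by
    intro c hc
    simp only [hA, hB, Finset.mem_union, not_or] at hc ⊢
    tauto
  refine ⟨fun z hz => ?_, fun z hz => ?_, fun z hz => ?_, fun c hc => ?_, fun c hc => ?_, ?_⟩
  · exact analyticAt_mul_entry (hR₂an z (hmem _ hz).2) (hR₁.analyticR z (hmem _ hz).1)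
  · exact analyticAt_mul_entry (hR₁.analyticRinv z (hmem _ hz).1) (hR₂aninv z (hmem _ hz).2)
  · obtain ⟨h₁, h₁'⟩ := hR₁.mul_inv z (hmem _ hz).1
    obtain ⟨h₂, h₂'⟩ := hR₂inv z (hmem _ hz).2
    constructor
    · calc R₂ z * R₁ z * (R₁inv z * R₂inv z) = R₂ z * (R₁ z * R₁inv z) * R₂inv z := by
            simp only [mul_assoc]
        _ = 1 := by rw [h₁, mul_one, h₂]
    · calc R₁inv z * R₂inv z * (R₂ z * R₁ z) = R₁inv z * (R₂inv z * R₂ z) * R₁ z := by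
            simp only [mul_assoc]
        _ = 1 := by rw [h₂', mul_one, h₁']
  · refine (hR₂ext c hc).congr_of_zloc_ne_zero fun z hz => ?_
    simp only [hD c z hz, mul_assoc]
  · refine (hR₂extinv c hc).congr_of_zloc_ne_zero fun z hz => ?_
    simp only [hDinv c z hz, mul_assoc]
  · intro i j
    refine (hR₂norm i j).congr' ?_ EventuallyEq.rfl
    filter_upwards [Bornology.eventually_ne_cobounded (0 : ℂ)] with z hz
    have hz' : zloc none z ≠ 0 := inv_ne_zero hz
    simp only [hD none z hz', mul_assoc]

end
end

section
/- Existence of the dressing matrix is equivalent to invertibility of the finite-dimensional Toeplitz-type map 𝒢 (with explicit inverse): the map 𝒢 sends V into W, and an admissible dressing R exists if and only if 𝒢 : V → W is bijective; in that case, setting R₊(z) := R(z)S(z) on 𝔻, the inverse is given by 𝒢^{-1}(w) = C₋[w·R₊^{-1}]·R for w ∈ W. -/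
/-!
The Cauchy projection `C₋[f]` depends only on the principal parts of `f` at the centers: on the
exterior it is minus their sum (`cauchy_main`, `Cm_eq`). Hence `V` and `W` consist of the
rational row vectors `p` with poles only at the centers, vanishing at infinity, for which
`p + h·S⁻¹`, respectively `p + h·S`, extends analytically to every center for some `h` analytic on
the disks (`image_char`); and `𝒢 v = q` says exactly that `v·S + q` extends analytically to every
center (`Gmap_eq`).

That `𝒢` maps `V` into `W` follows: if `v + h·S⁻¹` extends to the centers and `q = 𝒢 v`, then
`q + (v + h·S⁻¹)·S = (v·S + q) + h` extends as well (`part_one`).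

If a dressing `R` exists and `𝒢 v = 0`, then `v·R⁻¹ = (v·S)·R₊⁻¹` is entire and vanishes at
infinity, so `v = 0` by Liouville (`Dr.inj`); and `C₋[w·R₊⁻¹]·R` solves `𝒢 v = w`
(`Dr.inverse`), so `𝒢` is bijective with the stated inverse.

Conversely only surjectivity is needed. Solve `𝒢 p_k = -C₋[e_k·S]` for each unit row `e_k`; the
rows `e_k + p_k` form a matrix `R → 1` such that `R·S` extends to the centers. The function
`det R · ∏ (z-c)^{Tr N_c}` is then entire, and tends to `1` at infinity because the total index is
zero, so it is identically `1`. Cramer's rule therefore gives `R⁻¹` and `(R·S)⁻¹` without further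
poles (`exists_inverse`, `exists_dressing`).
-/

open Filter Asymptotics
open scoped Classical

noncomputable section

section Dressing

variable (N n : ℕ) (cs : Fin n → ℂ) (rd : Fin n → ℝ) (Nc : Fin n → Fin N → ℤ)
  (Γ Γinv : ℂ → Mat N)

/-- The locally defined diagonal matrix, equal to `(z−c)^{N_c}` on the disk
`𝔻_c` (radius `rd`) and to `1` elsewhere. -/
def Dloc (z : ℂ) : Mat N :=
  Matrix.diagonal fun μ =>
    ∏ i, (if z ∈ Metric.closedBall (cs i) (rd i) then (z - cs i) ^ Nc i μ else 1)

/-- The inverse of `Dloc`. -/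
def Dlocinv (z : ℂ) : Mat N :=
  Matrix.diagonal fun μ =>
    ∏ i, (if z ∈ Metric.closedBall (cs i) (rd i) then (z - cs i) ^ (-(Nc i μ)) else 1)

/-- `S(z) = Γ(z)·(z−c)^{N_c}` for `z ∈ 𝔻_c`. -/
def Sfun (z : ℂ) : Mat N := Γ z * Dloc N n cs rd Nc z

/-- `S(z)⁻¹ = (z−c)^{−N_c}·Γ(z)⁻¹` for `z ∈ 𝔻_c`. -/
def Sinv (z : ℂ) : Mat N := Dlocinv N n cs rd Nc z * Γinv z

/-- `ℋ₊`: row-vector valued functions analytic on a neighborhood of `𝔻`. -/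
def Hplus (h : ℂ → Fin N → ℂ) : Prop :=
  ∀ μ : Fin N, ∀ i : Fin n, ∀ z ∈ Metric.closedBall (cs i) (rd i),
    AnalyticAt ℂ (fun w => h w μ) z

/-- The Cauchy projection `C₋[f](z) = (1/2πi)∮_{∂𝔻} f(ζ)/(ζ−z) dζ` (for `z` in the
exterior of `𝔻`), the boundary `∂𝔻` consisting of the circles of radii `ρ`. -/
def Cm (ρ : Fin n → ℝ) (f : ℂ → Fin N → ℂ) (z : ℂ) : Fin N → ℂ :=
  fun μ => ∑ i, (2 * (Real.pi : ℂ) * Complex.I)⁻¹ *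
    (∮ ζ in C(cs i, ρ i), f ζ μ / (ζ - z))

/-- The exterior of the disks of radii `ρ`. -/
def ExtOf (ρ : Fin n → ℝ) : Set ℂ := {z : ℂ | ∀ i, ρ i < dist z (cs i)}

variable (r r' : Fin n → ℝ)

/-- `V := C₋[ℋ₊·S⁻¹]`: membership of a function, identified by its restriction to
the exterior of `𝔻` (the defining contours being the circles of radii `r`). -/
def InV (v : ℂ → Fin N → ℂ) : Prop :=
  ∃ h, Hplus N n cs r' h ∧
    Set.EqOn v (Cm N n cs r (fun ζ => Matrix.vecMul (h ζ) (Sinv N n cs r' Nc Γinv ζ)))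
      (ExtOf n cs r)

/-- `W := C₋[ℋ₊·S]`. -/
def InW (w : ℂ → Fin N → ℂ) : Prop :=
  ∃ h, Hplus N n cs r' h ∧
    Set.EqOn w (Cm N n cs r (fun ζ => Matrix.vecMul (h ζ) (Sfun N n cs r' Nc Γ ζ)))
      (ExtOf n cs r)

/-- The Toeplitz-type map `𝒢(v) = C₋[v·S]`, the boundary values of `v` on `∂𝔻`
being taken from the exterior (contours of radii `r'`, slightly outside those of
radii `r`, where elements of `V` are honest analytic functions). -/
def Gmap (v : ℂ → Fin N → ℂ) : ℂ → Fin N → ℂ :=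
  Cm N n cs r' (fun ζ => Matrix.vecMul (v ζ) (Sfun N n cs r' Nc Γ ζ))

/-- An **admissible dressing**: an `N×N` matrix `R(z)` of rational functions of
`z`, invertible for every `z ∉ 𝒞`, with `R(z) → 1` as `z → ∞`, such that for each
`c` the function `R(z)Γ(z)(z−c)^{N_c}` together with its inverse extends
analytically to `𝔻_c`. -/
def IsDressing (R Rinv : ℂ → Mat N) : Prop :=
  (∀ z : ℂ, z ∉ Set.range cs → ∀ i j : Fin N, AnalyticAt ℂ (fun w => R w i j) z) ∧
  (∀ z : ℂ, z ∉ Set.range cs → ∀ i j : Fin N, AnalyticAt ℂ (fun w => Rinv w i j) z) ∧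
  (∀ z : ℂ, z ∉ Set.range cs → R z * Rinv z = 1 ∧ Rinv z * R z = 1) ∧
  Filter.Tendsto R (Bornology.cobounded ℂ) (nhds 1) ∧
  (∀ i : Fin n, ∀ a b : Fin N,
    ExtAt (fun z => (R z * Γ z * Matrix.diagonal fun μ => (z - cs i) ^ Nc i μ) a b) (cs i)) ∧
  (∀ i : Fin n, ∀ a b : Fin N,
    ExtAt (fun z =>
      ((Matrix.diagonal fun μ => (z - cs i) ^ (-(Nc i μ))) * Γinv z * Rinv z) a b) (cs i))

end Dressing

/-! ### Function algebras and extendability -/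

namespace Dress

/-- Functions analytic at `c`, as a subalgebra of all functions `ℂ → ℂ`. -/
def anAlg (c : ℂ) : Subalgebra ℂ (ℂ → ℂ) where
  carrier := {f | AnalyticAt ℂ f c}
  mul_mem' := fun ha hb => AnalyticAt.mul ha hb
  add_mem' := fun ha hb => AnalyticAt.add ha hb
  algebraMap_mem' := fun _ => analyticAt_const

/-- Functions meromorphic at `c`, as a subalgebra. -/
def merAlg (c : ℂ) : Subalgebra ℂ (ℂ → ℂ) where
  carrier := {f | MeromorphicAt f c}
  mul_mem' := fun ha hb => MeromorphicAt.mul ha hb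
  add_mem' := fun ha hb => MeromorphicAt.add ha hb
  algebraMap_mem' := fun _ => MeromorphicAt.const _ _

/-- Functions that extend analytically to `c`, as a subalgebra. -/
def extAlg (c : ℂ) : Subalgebra ℂ (ℂ → ℂ) where
  carrier := {f | ExtAt f c}
  mul_mem' := by
    rintro a b ⟨g, hg, h1⟩ ⟨k, hk, h2⟩
    exact ⟨g * k, hg.mul hk, by filter_upwards [h1, h2] with z e1 e2; simp [e1, e2]⟩
  add_mem' := by
    rintro a b ⟨g, hg, h1⟩ ⟨k, hk, h2⟩
    exact ⟨g + k, hg.add hk, by filter_upwards [h1, h2] with z e1 e2; simp [e1, e2]⟩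
  algebraMap_mem' := fun a => ⟨fun _ => a, analyticAt_const, Eventually.of_forall fun _ => rfl⟩

lemma extAt_of_an {f : ℂ → ℂ} {c : ℂ} (h : AnalyticAt ℂ f c) : ExtAt f c :=
  ⟨f, h, Eventually.of_forall fun _ => rfl⟩

lemma mer_of_ext {f : ℂ → ℂ} {c : ℂ} (h : ExtAt f c) : MeromorphicAt f c := by
  obtain ⟨g, hg, e⟩ := h
  exact hg.meromorphicAt.congr e

lemma ext_congr {f g : ℂ → ℂ} {c : ℂ} (h : ExtAt f c)
    (e : ∀ᶠ z in nhdsWithin c {c}ᶜ, f z = g z) : ExtAt g c := by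
  obtain ⟨k, hk, e'⟩ := h
  exact ⟨k, hk, by filter_upwards [e, e'] with z h1 h2; rw [h2, h1]⟩

/-- `f` with its values on `s` replaced by the punctured limits. -/
def fill (s : Set ℂ) (f : ℂ → ℂ) (z : ℂ) : ℂ :=
  if z ∈ s then limUnder (nhdsWithin z {z}ᶜ) f else f z

lemma fill_eq {s : Set ℂ} {f : ℂ → ℂ} {z : ℂ} (h : z ∉ s) : fill s f z = f z := by
  simp [fill, h]

lemma eventually_notMem {s : Set ℂ} (hs : s.Finite) (z : ℂ) :
    ∀ᶠ w in nhdsWithin z {z}ᶜ, w ∉ s := by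
  have h1 : IsClosed (s \ {z}) := (hs.subset Set.sdiff_subset).isClosed
  have h2 : ∀ᶠ w in nhds z, w ∉ s \ {z} := h1.isOpen_compl.mem_nhds (by simp)
  filter_upwards [h2.filter_mono nhdsWithin_le_nhds, self_mem_nhdsWithin] with w h3 h4 h5
  exact h3 ⟨h5, h4⟩

lemma fill_an_of_ext {s : Set ℂ} (hs : s.Finite) {f : ℂ → ℂ} {c : ℂ} (hc : c ∈ s)
    (h : ExtAt f c) : AnalyticAt ℂ (fill s f) c := by
  obtain ⟨g, hg, e⟩ := h
  refine hg.congr ?_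
  have h1 : Tendsto f (nhdsWithin c {c}ᶜ) (nhds (g c)) :=
    (hg.continuousAt.tendsto.mono_left nhdsWithin_le_nhds).congr' e
  have h2 : ∀ᶠ z in nhdsWithin c {c}ᶜ, g z = fill s f z := by
    filter_upwards [e, eventually_notMem hs c] with z h3 h4
    rw [fill_eq h4, h3]
  rw [eventually_nhdsWithin_iff] at h2
  filter_upwards [h2] with z hz
  by_cases hzc : z = c
  · subst hzc
    simp [fill, hc, h1.limUnder_eq]
  · exact hz hzc

lemma fill_an {s : Set ℂ} (hs : s.Finite) {f : ℂ → ℂ} {c : ℂ} (hc : c ∉ s)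
    (h : AnalyticAt ℂ f c) : AnalyticAt ℂ (fill s f) c := by
  refine h.congr ?_
  filter_upwards [hs.isClosed.isOpen_compl.mem_nhds hc] with z hz
  rw [fill_eq hz]

/-- Liouville's theorem with removable singularities at a finite set. -/
lemma liouville {s : Set ℂ} (hs : s.Finite) {f : ℂ → ℂ} {a : ℂ}
    (h1 : ∀ z ∉ s, AnalyticAt ℂ f z) (h2 : ∀ z ∈ s, ExtAt f z)
    (h3 : Tendsto f (Bornology.cobounded ℂ) (nhds a)) : ∀ z ∉ s, f z = a := by
  intro z hz
  rw [← fill_eq (f := f) hz]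
  have hd : Differentiable ℂ (fill s f) := fun w => ?_
  · refine hd.apply_eq_of_tendsto_cocompact z ?_
    rw [← Metric.cobounded_eq_cocompact]
    refine h3.congr' ?_
    have : sᶜ ∈ Bornology.cobounded ℂ := by
      simpa using Bornology.isBounded_def.1 hs.isBounded
    filter_upwards [this] with w hw
    rw [fill_eq hw]
  · by_cases hw : w ∈ s
    · exact (fill_an_of_ext hs hw (h2 w hw)).differentiableAt
    · exact (fill_an hs hw (h1 w hw)).differentiableAt

/-! ### Principal parts and the Cauchy projection -/

/-- The principal part `∑_{k<m} a_k (z-c)^{-(k+1)}`. -/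
def polar (c : ℂ) (m : ℕ) (a : ℕ → ℂ) (z : ℂ) : ℂ :=
  ∑ k ∈ Finset.range m, a k * ((z - c) ^ (k + 1))⁻¹

lemma polar_an {c : ℂ} (m : ℕ) (a : ℕ → ℂ) {z : ℂ} (h : z ≠ c) :
    AnalyticAt ℂ (polar c m a) z := by
  have h' := sub_ne_zero.2 h
  unfold polar
  refine Finset.analyticAt_fun_sum _ fun k _ => ?_
  exact analyticAt_const.mul (((analyticAt_id.sub analyticAt_const).pow (k+1)).inv (pow_ne_zero _ h'))

lemma polar_mer (c : ℂ) (m : ℕ) (a : ℕ → ℂ) (z : ℂ) :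
    MeromorphicAt (polar c m a) z := by
  unfold polar
  refine MeromorphicAt.fun_sum fun k _ => ?_
  exact (MeromorphicAt.const _ _).mul (((MeromorphicAt.id z).sub (MeromorphicAt.const _ _)).pow _).inv

lemma tendsto_sub_cob (c : ℂ) :
    Tendsto (fun z : ℂ => z - c) (Bornology.cobounded ℂ) (Bornology.cobounded ℂ) := by
  rw [Metric.cobounded_eq_cocompact]
  exact (Homeomorph.subRight c).isClosedEmbedding.tendsto_cocompact

lemma polar_tendsto (c : ℂ) (m : ℕ) (a : ℕ → ℂ) :
    Tendsto (polar c m a) (Bornology.cobounded ℂ) (nhds 0) := by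
  have h1 : Tendsto (fun z : ℂ => (z - c)⁻¹) (Bornology.cobounded ℂ) (nhds 0) :=
    (tendsto_inv₀_cobounded (α := ℂ)).comp (tendsto_sub_cob c)
  have := tendsto_finsetSum (Finset.range m) fun k _ => (h1.pow (k + 1)).const_mul (a k)
  unfold polar
  simpa using this

/-- A pole can be removed one order at a time: subtracting `g(c)(z-c)^{-(n+1)}` lowers it. -/
lemma laurent_aux (c : ℂ) (n : ℕ) : ∀ f : ℂ → ℂ, ExtAt (fun z => (z - c) ^ n * f z) c →
    ∃ a, ExtAt (fun z => f z - polar c n a z) c := by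
  induction n with
  | zero => intro f hf; exact ⟨fun _ => 0, by simpa [polar] using hf⟩
  | succ n ih =>
    rintro f ⟨g, hg, e⟩
    obtain ⟨a, ha⟩ := ih (fun z => f z - g c * ((z - c) ^ (n + 1))⁻¹) (by
      have hd : AnalyticAt ℂ (dslope g c) c := by
        obtain ⟨p, hp⟩ := hg
        exact ⟨_, hp.has_fpower_series_dslope_fslope⟩
      refine ⟨dslope g c, hd, ?_⟩
      filter_upwards [e, self_mem_nhdsWithin] with z h1 h2
      have h3 : z - c ≠ 0 := sub_ne_zero.2 h2
      rw [dslope_of_ne _ h2, slope_def_field, h1]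
      field_simp
      ring)
    refine ⟨fun k => if k = n then g c else a k, ?_⟩
    convert ha using 2 with z
    have : ∑ k ∈ Finset.range n, (if k = n then g c else a k) * ((z - c) ^ (k + 1))⁻¹
        = ∑ k ∈ Finset.range n, a k * ((z - c) ^ (k + 1))⁻¹ :=
      Finset.sum_congr rfl fun k hk => by rw [if_neg (Finset.mem_range.1 hk).ne]
    simp only [polar, Finset.sum_range_succ, this, if_true]
    ring

lemma laurent {f : ℂ → ℂ} {c : ℂ} (h : MeromorphicAt f c) :
    ∃ m a, ExtAt (fun z => f z - polar c m a z) c := by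
  obtain ⟨n, hn⟩ := h
  obtain ⟨a, ha⟩ := laurent_aux c n f (extAt_of_an (by simpa using hn))
  exact ⟨n, a, ha⟩

lemma cauchy_zero {f : ℂ → ℂ} {c z : ℂ} {ρ : ℝ} (hρ : 0 ≤ ρ) (hz : ρ < dist z c)
    (hf : ∀ w ∈ Metric.closedBall c ρ, AnalyticAt ℂ f w) :
    (∮ ζ in C(c, ρ), f ζ / (ζ - z)) = 0 := by
  have key : ∀ w ∈ Metric.closedBall c ρ, AnalyticAt ℂ (fun ζ => f ζ / (ζ - z)) w := by
    intro w hw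
    refine (hf w hw).div (analyticAt_id.sub analyticAt_const) (sub_ne_zero.2 ?_)
    rintro h
    replace h : w = z := h
    rw [h] at hw
    exact absurd (Metric.mem_closedBall.1 hw) (not_le.2 hz)
  refine Complex.circleIntegral_eq_zero_of_differentiable_on_off_countable hρ
    Set.countable_empty (fun w hw => (key w hw).continuousAt.continuousWithinAt) fun w hw =>
      (key w (Metric.ball_subset_closedBall hw.1)).differentiableAt

lemma ci_of_an {f : ℂ → ℂ} {c : ℂ} {ρ : ℝ} (hρ : 0 ≤ ρ)
    (hf : ∀ w ∈ Metric.sphere c ρ, AnalyticAt ℂ f w) : CircleIntegrable f c ρ :=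
  ContinuousOn.circleIntegrable hρ fun w hw => (hf w hw).continuousAt.continuousWithinAt

lemma ne_of_dist {c z w : ℂ} {ρ : ℝ} (hz : ρ < dist z c) (hw : w ∈ Metric.sphere c ρ) :
    w - z ≠ 0 := by
  rw [sub_ne_zero]; rintro rfl; exact hz.ne' hw

lemma ne_center {c w : ℂ} {ρ : ℝ} (hρ : 0 < ρ) (hw : w ∈ Metric.sphere c ρ) :
    w - c ≠ 0 := by
  rw [sub_ne_zero]; rintro rfl; simp at hw; exact hρ.ne hw

/-- `∮ (ζ-c)^{-(k+1)}/(ζ-z) dζ = -2πi (z-c)^{-(k+1)}` for `z` outside the circle, from the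
partial fraction of `1/((ζ-c)(ζ-z))`. -/
lemma cauchy_pow {c z : ℂ} {ρ : ℝ} (hρ : 0 < ρ) (hz : ρ < dist z c) (k : ℕ) :
    (∮ ζ in C(c, ρ), ((ζ - c) ^ (k + 1))⁻¹ / (ζ - z)) =
      -(2 * (Real.pi : ℂ) * Complex.I) * ((z - c) ^ (k + 1))⁻¹ := by
  have hzc : z - c ≠ 0 := by
    rw [sub_ne_zero]; rintro rfl; simp at hz; exact absurd hz (not_lt.2 hρ.le)
  have step : ∀ m : ℕ, (∮ ζ in C(c, ρ), ((ζ - c) ^ (m + 1))⁻¹ / (ζ - z)) =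
      (z - c)⁻¹ * ((∮ ζ in C(c, ρ), ((ζ - c) ^ m)⁻¹ / (ζ - z)) -
        ∮ ζ in C(c, ρ), ((ζ - c) ^ (m + 1))⁻¹) := by
    intro m
    rw [← circleIntegral.integral_sub, ← circleIntegral.integral_const_mul]
    · refine circleIntegral.integral_congr hρ.le fun w hw => ?_
      have h1 := ne_of_dist hz hw
      have h2 := ne_center hρ hw
      field_simp
      ring
    · refine ci_of_an hρ.le fun w hw => ?_
      have h1 := ne_of_dist hz hw
      have h2 := ne_center hρ hw
      exact (((analyticAt_id.sub analyticAt_const).pow m).inv (pow_ne_zero _ h2)).div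
        (analyticAt_id.sub analyticAt_const) h1
    · refine ci_of_an hρ.le fun w hw => ?_
      have h2 := ne_center hρ hw
      exact ((analyticAt_id.sub analyticAt_const).pow _).inv (pow_ne_zero _ h2)
  induction k with
  | zero =>
    rw [step 0]
    have h0 : (∮ ζ in C(c, ρ), ((ζ - c) ^ 0)⁻¹ / (ζ - z)) = 0 := by
      have := cauchy_zero (f := fun _ => 1) hρ.le hz fun w _ => analyticAt_const
      simpa using this
    rw [h0]
    have := circleIntegral.integral_sub_center_inv c hρ.ne'
    simp only [zero_add, pow_one, this]
    ring
  | succ k ih =>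
    rw [step (k + 1), ih]
    have h1 := circleIntegral.integral_sub_zpow_of_ne (n := -((k : ℤ) + 1 + 1)) (by lia) c c ρ
    have h2 : (∮ ζ in C(c, ρ), ((ζ - c) ^ (k + 1 + 1))⁻¹) = 0 := by
      rw [← h1]
      refine circleIntegral.integral_congr hρ.le fun w hw => ?_
      rw [zpow_neg]; norm_cast
    rw [h2, pow_succ (z - c) (k + 1), mul_inv]
    ring

lemma cauchy_polar {c z : ℂ} {ρ : ℝ} (hρ : 0 < ρ) (hz : ρ < dist z c) (m : ℕ) (a : ℕ → ℂ) :
    (∮ ζ in C(c, ρ), polar c m a ζ / (ζ - z)) =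
      -(2 * (Real.pi : ℂ) * Complex.I) * polar c m a z := by
  have h1 : (∮ ζ in C(c, ρ), polar c m a ζ / (ζ - z)) =
      ∮ ζ in C(c, ρ), ∑ k ∈ Finset.range m, a k * (((ζ - c) ^ (k + 1))⁻¹ / (ζ - z)) := by
    refine circleIntegral.integral_congr hρ.le fun w hw => ?_
    simp only [polar, Finset.sum_div, mul_div_assoc]
  rw [h1, circleIntegral.integral_fun_sum]
  · simp only [circleIntegral.integral_const_mul, cauchy_pow hρ hz, polar, Finset.mul_sum]
    exact Finset.sum_congr rfl fun k _ => by ring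
  · intro k _
    refine ci_of_an hρ.le fun w hw => ?_
    exact analyticAt_const.mul ((((analyticAt_id.sub analyticAt_const).pow _).inv
      (pow_ne_zero _ (ne_center hρ hw))).div
        (analyticAt_id.sub analyticAt_const) (ne_of_dist hz hw))

section Scalar

variable {n : ℕ} {cs : Fin n → ℂ}

/-- Rational functions with poles in the set of centers, vanishing at infinity. -/
structure Pol (cs : Fin n → ℂ) (p : ℂ → ℂ) : Prop where
  an : ∀ z ∉ Set.range cs, AnalyticAt ℂ p z
  mer : ∀ i, MeromorphicAt p (cs i)
  lim : Tendsto p (Bornology.cobounded ℂ) (nhds 0)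

lemma Pol.add {p q : ℂ → ℂ} (hp : Pol cs p) (hq : Pol cs q) : Pol cs (fun z => p z + q z) :=
  ⟨fun z hz => (hp.an z hz).add (hq.an z hz), fun i => (hp.mer i).add (hq.mer i),
    by simpa using hp.lim.add hq.lim⟩

lemma Pol.neg {p : ℂ → ℂ} (hp : Pol cs p) : Pol cs (fun z => -p z) :=
  ⟨fun z hz => (hp.an z hz).neg, fun i => (hp.mer i).neg, by simpa using hp.lim.neg⟩

lemma Pol.sub {p q : ℂ → ℂ} (hp : Pol cs p) (hq : Pol cs q) : Pol cs (fun z => p z - q z) := by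
  simpa [sub_eq_add_neg] using hp.add hq.neg

lemma Pol.sum {ι : Type*} (s : Finset ι) {p : ι → ℂ → ℂ} (hp : ∀ i ∈ s, Pol cs (p i)) :
    Pol cs (fun z => ∑ i ∈ s, p i z) :=
  ⟨fun z hz => Finset.analyticAt_fun_sum _ fun i hi => (hp i hi).an z hz,
    fun j => MeromorphicAt.fun_sum fun i hi => (hp i hi).mer j, by
      simpa using tendsto_finsetSum s fun i hi => (hp i hi).lim⟩

lemma pol_polar (i : Fin n) (m : ℕ) (a : ℕ → ℂ) : Pol cs (polar (cs i) m a) :=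
  ⟨fun _ hz => polar_an m a fun h => hz ⟨i, h.symm⟩, fun _ => polar_mer _ _ _ _,
    polar_tendsto _ _ _⟩

/-- Mittag-Leffler for finitely many poles. -/
lemma exists_polar (hcs : Function.Injective cs) (G : Fin n → ℂ → ℂ)
    (hG : ∀ i, MeromorphicAt (G i) (cs i)) :
    ∃ (m : Fin n → ℕ) (a : Fin n → ℕ → ℂ),
      ∀ i, ExtAt (fun z => G i z - ∑ j, polar (cs j) (m j) (a j) z) (cs i) := by
  choose m a h using fun i => laurent (hG i)
  refine ⟨m, a, fun i => ?_⟩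
  have h1 : ExtAt (fun z => ∑ j ∈ Finset.univ.erase i, polar (cs j) (m j) (a j) z) (cs i) := by
    refine extAt_of_an (Finset.analyticAt_fun_sum _ fun j hj => polar_an _ _ fun h => ?_)
    exact (Finset.ne_of_mem_erase hj) (hcs h).symm
  have h2 := (extAlg (cs i)).sub_mem (h i) h1
  refine ext_congr h2 (Eventually.of_forall fun z => ?_)
  simp only [Pi.sub_apply]
  rw [← Finset.add_sum_erase _ _ (Finset.mem_univ i)]
  ring

lemma exists_pol (hcs : Function.Injective cs) (G : Fin n → ℂ → ℂ)
    (hG : ∀ i, MeromorphicAt (G i) (cs i)) :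
    ∃ p, Pol cs p ∧ ∀ i, ExtAt (fun z => G i z - p z) (cs i) := by
  obtain ⟨m, a, h⟩ := exists_polar hcs G hG
  exact ⟨_, Pol.sum Finset.univ fun j _ => pol_polar j (m j) (a j), h⟩

lemma Pol.eq_zero {p : ℂ → ℂ} (hp : Pol cs p) (h : ∀ i, ExtAt p (cs i)) :
    ∀ z ∉ Set.range cs, p z = 0 :=
  liouville (Set.finite_range cs) hp.an (by rintro _ ⟨i, rfl⟩; exact h i) hp.lim

/-- The exterior Cauchy projection returns minus the principal part of the boundary data. -/
lemma cauchy_main (hcs : Function.Injective cs) {ρ : Fin n → ℝ} (hρ : ∀ i, 0 < ρ i)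
    (hdisj : ∀ i j, i ≠ j → ρ i < dist (cs i) (cs j))
    {F : ℂ → ℂ} {G : Fin n → ℂ → ℂ} {p : ℂ → ℂ} (hp : Pol cs p)
    (hG : ∀ i, ∀ z ∈ Metric.closedBall (cs i) (ρ i), z ≠ cs i → AnalyticAt ℂ (G i) z)
    (hext : ∀ i, ExtAt (fun z => G i z - p z) (cs i))
    (hF : ∀ i, ∀ ζ ∈ Metric.sphere (cs i) (ρ i), F ζ = G i ζ)
    {z : ℂ} (hz : ∀ i, ρ i < dist z (cs i)) :
    ∑ i, (2 * (Real.pi : ℂ) * Complex.I)⁻¹ * (∮ ζ in C(cs i, ρ i), F ζ / (ζ - z)) = -p z := by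
  obtain ⟨m, a, hma⟩ := exists_polar hcs (fun _ => p) hp.mer
  have hq : Pol cs (fun z => ∑ j, polar (cs j) (m j) (a j) z) :=
    Pol.sum Finset.univ fun j _ => pol_polar j (m j) (a j)
  have hpq : ∀ w ∉ Set.range cs, p w = ∑ j, polar (cs j) (m j) (a j) w := fun w hw =>
    sub_eq_zero.1 ((hp.sub hq).eq_zero hma w hw)
  have hcn : (2 * (Real.pi : ℂ) * Complex.I) ≠ 0 := Complex.two_pi_I_ne_zero
  have hzc : z ∉ Set.range cs := by
    rintro ⟨i, rfl⟩
    have := hz i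
    rw [dist_self] at this
    exact absurd this (not_lt.2 (hρ i).le)
  have hpunc : ∀ i, ∀ w ∈ Metric.closedBall (cs i) (ρ i), w ≠ cs i → w ∉ Set.range cs := by
    rintro i w hw hne ⟨j, rfl⟩
    have hij : i ≠ j := fun h => hne (by rw [h])
    have := hdisj i j hij
    rw [dist_comm] at this
    exact absurd (Metric.mem_closedBall.1 hw) (not_le.2 this)
  have hsph : ∀ i, ∀ w ∈ Metric.sphere (cs i) (ρ i),
      w ∈ Metric.closedBall (cs i) (ρ i) ∧ w ≠ cs i := fun i w hw =>
    ⟨Metric.sphere_subset_closedBall hw, sub_ne_zero.1 (ne_center (hρ i) hw)⟩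
  have main : ∀ i, (∮ ζ in C(cs i, ρ i), F ζ / (ζ - z)) =
      -(2 * (Real.pi : ℂ) * Complex.I) * polar (cs i) (m i) (a i) z := by
    intro i
    set g : ℂ → ℂ := fill {cs i} (fun w => G i w - polar (cs i) (m i) (a i) w) with hg
    have hext' : ExtAt (fun w => G i w - polar (cs i) (m i) (a i) w) (cs i) := by
      have h1 : ExtAt (fun z => ∑ j ∈ Finset.univ.erase i, polar (cs j) (m j) (a j) z) (cs i) := by
        refine extAt_of_an (Finset.analyticAt_fun_sum _ fun j hj => polar_an _ _ fun h => ?_)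
        exact (Finset.ne_of_mem_erase hj) (hcs h).symm
      have h2 := (extAlg (cs i)).add_mem ((extAlg (cs i)).add_mem (hext i) (hma i)) h1
      refine ext_congr h2 (Eventually.of_forall fun w => ?_)
      simp only [Pi.add_apply]
      rw [← Finset.add_sum_erase _ _ (Finset.mem_univ i)]
      ring
    have hgan : ∀ w ∈ Metric.closedBall (cs i) (ρ i), AnalyticAt ℂ g w := by
      intro w hw
      by_cases hwc : w = cs i
      · subst hwc
        exact fill_an_of_ext (Set.finite_singleton _) rfl hext'
      · exact fill_an (Set.finite_singleton _) hwc ((hG i w hw hwc).sub (polar_an _ _ hwc))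
    have h3 : (∮ ζ in C(cs i, ρ i), F ζ / (ζ - z)) =
        ∮ ζ in C(cs i, ρ i), (g ζ / (ζ - z) + polar (cs i) (m i) (a i) ζ / (ζ - z)) := by
      refine circleIntegral.integral_congr (hρ i).le fun w hw => ?_
      have h4 := (hsph i w hw).2
      simp only [hF i w hw, hg]
      rw [fill_eq (by simpa using h4)]
      ring
    rw [h3, circleIntegral.integral_add, cauchy_zero (hρ i).le (hz i) hgan,
      cauchy_polar (hρ i) (hz i), zero_add]
    · refine ci_of_an (hρ i).le fun w hw => ?_
      exact (hgan w (hsph i w hw).1).div (analyticAt_id.sub analyticAt_const) (ne_of_dist (hz i) hw)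
    · refine ci_of_an (hρ i).le fun w hw => ?_
      exact (polar_an _ _ (hsph i w hw).2).div (analyticAt_id.sub analyticAt_const)
        (ne_of_dist (hz i) hw)
  rw [hpq z hzc, ← Finset.sum_neg_distrib]
  refine Finset.sum_congr rfl fun i _ => ?_
  rw [main i]
  field_simp

/-- Identity theorem: agreement on the exterior of the disks forces agreement off the centers. -/
lemma pol_ident {ρ : Fin n → ℝ} {p q : ℂ → ℂ} (hp : Pol cs p) (hq : Pol cs q)
    (h : ∀ z ∈ ExtOf n cs ρ, p z = q z) : ∀ z ∉ Set.range cs, p z = q z := by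
  have hcof : ∀ᶠ z in Bornology.cobounded ℂ, z ∈ ExtOf n cs ρ := by
    simp only [ExtOf, Set.mem_ofPred_eq, eventually_all]
    intro i
    exact (Metric.tendsto_dist_right_cobounded_atTop (cs i)).eventually_gt_atTop (ρ i)
  have hcof2 : ∀ᶠ z in Bornology.cobounded ℂ, z ∉ Set.range cs :=
    Bornology.isBounded_def.1 (Set.finite_range cs).isBounded
  obtain ⟨z₀, hz₀, hz₁⟩ := (hcof.and hcof2).exists
  have hop : IsOpen (ExtOf n cs ρ) := by
    simp only [ExtOf, Set.ofPred_forall]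
    exact isOpen_iInter_of_finite fun i => isOpen_lt continuous_const (by fun_prop)
  have hconn : IsPreconnected (Set.range cs)ᶜ :=
    (Set.Countable.isConnected_compl_of_one_lt_rank (by simp)
      (Set.finite_range cs).countable).isPreconnected
  refine AnalyticOnNhd.eqOn_of_preconnected_of_eventuallyEq (fun z hz => hp.an z hz)
    (fun z hz => hq.an z hz) hconn hz₁ ?_
  filter_upwards [hop.mem_nhds hz₀] with z hz using h z hz

end Scalar

/-! ### Row vectors and matrices with entries in a function algebra -/

/-- All components of the row vector `v` lie in the function algebra `A`. -/
def VIn {N : ℕ} (A : Subalgebra ℂ (ℂ → ℂ)) (v : ℂ → Fin N → ℂ) : Prop :=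
  ∀ μ, (fun z => v z μ) ∈ A

/-- All entries of the matrix `M` lie in the function algebra `A`. -/
def MIn {N : ℕ} (A : Subalgebra ℂ (ℂ → ℂ)) (M : ℂ → Mat N) : Prop :=
  ∀ i j, (fun z => M z i j) ∈ A

section Algebra

variable {N : ℕ} {A : Subalgebra ℂ (ℂ → ℂ)} {v w : ℂ → Fin N → ℂ} {M P : ℂ → Mat N}

lemma sum_mem' {ι : Type*} (s : Finset ι) {f : ι → ℂ → ℂ} (h : ∀ i ∈ s, f i ∈ A) :
    (fun z => ∑ i ∈ s, f i z) ∈ A := by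
  have := A.sum_mem h
  convert this using 1
  ext z; simp

lemma prod_mem' {ι : Type*} (s : Finset ι) {f : ι → ℂ → ℂ} (h : ∀ i ∈ s, f i ∈ A) :
    (fun z => ∏ i ∈ s, f i z) ∈ A := by
  have := A.prod_mem h
  convert this using 1
  ext z; simp

lemma const_mem' (a : ℂ) : (fun _ : ℂ => a) ∈ A := A.algebraMap_mem a

lemma mul_mem'' {f g : ℂ → ℂ} (hf : f ∈ A) (hg : g ∈ A) : (fun z => f z * g z) ∈ A :=
  A.mul_mem hf hg

lemma VIn.add (hv : VIn A v) (hw : VIn A w) : VIn A (fun z => v z + w z) :=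
  fun μ => A.add_mem (hv μ) (hw μ)

lemma VIn.sub (hv : VIn A v) (hw : VIn A w) : VIn A (fun z => v z - w z) :=
  fun μ => A.sub_mem (hv μ) (hw μ)

lemma VIn.neg (hv : VIn A v) : VIn A (fun z => -v z) :=
  fun μ => A.neg_mem (hv μ)

lemma VIn.vecMul (hv : VIn A v) (hM : MIn A M) : VIn A (fun z => Matrix.vecMul (v z) (M z)) :=
  fun μ => sum_mem' Finset.univ fun ν _ => mul_mem'' (hv ν) (hM ν μ)

lemma MIn.mul (hM : MIn A M) (hP : MIn A P) : MIn A (fun z => M z * P z) := fun i j => by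
  simp only [Matrix.mul_apply]
  exact sum_mem' _ fun k _ => mul_mem'' (hM i k) (hP k j)

lemma MIn.smul {f : ℂ → ℂ} (hf : f ∈ A) (hM : MIn A M) : MIn A (fun z => f z • M z) :=
  fun i j => mul_mem'' hf (hM i j)

lemma MIn.diagonal {d : ℂ → Fin N → ℂ} (hd : VIn A d) : MIn A (fun z => Matrix.diagonal (d z)) := by
  intro i j
  by_cases h : i = j
  · subst h; simpa using hd i
  · simpa [h] using const_mem' (A := A) 0

lemma MIn.det (hM : MIn A M) : (fun z => (M z).det) ∈ A := by
  simp only [Matrix.det_apply']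
  exact sum_mem' _ fun σ _ => mul_mem'' (const_mem' _) (prod_mem' _ fun i _ => hM _ _)

lemma MIn.adjugate (hM : MIn A M) : MIn A (fun z => (M z).adjugate) := by
  intro i j
  simp only [Matrix.adjugate_apply]
  refine MIn.det (M := fun z => (M z).updateRow j (Pi.single i 1)) fun a b => ?_
  by_cases h : a = j
  · subst h; simpa using const_mem' (A := A) _
  · simpa [Matrix.updateRow_ne h] using hM a b

end Algebra

lemma VIn.mer_of_ext {N : ℕ} {v : ℂ → Fin N → ℂ} {c : ℂ} (h : VIn (extAlg c) v) :
    VIn (merAlg c) v := fun μ => Dress.mer_of_ext (h μ)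

lemma MIn.mer_of_ext {N : ℕ} {v : ℂ → Mat N} {c : ℂ} (h : MIn (extAlg c) v) :
    MIn (merAlg c) v := fun i j => Dress.mer_of_ext (h i j)

lemma MIn.mer_of_an {N : ℕ} {v : ℂ → Mat N} {c : ℂ} (h : MIn (anAlg c) v) :
    MIn (merAlg c) v := fun i j => AnalyticAt.meromorphicAt (h i j)

lemma MIn.ext_of_an {N : ℕ} {v : ℂ → Mat N} {c : ℂ} (h : MIn (anAlg c) v) :
    MIn (extAlg c) v := fun i j => extAt_of_an (h i j)

lemma VIn.ext_of_an {N : ℕ} {v : ℂ → Fin N → ℂ} {c : ℂ} (h : VIn (anAlg c) v) :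
    VIn (extAlg c) v := fun i => extAt_of_an (h i)

lemma eventually_punct {c : ℂ} {ρ : ℝ} (hρ : 0 < ρ) :
    ∀ᶠ z in nhdsWithin c {c}ᶜ, z ∈ Metric.closedBall c ρ ∧ z ≠ c := by
  filter_upwards [mem_nhdsWithin_of_mem_nhds (Metric.closedBall_mem_nhds c hρ),
    self_mem_nhdsWithin] with z h1 h2
  exact ⟨h1, h2⟩

lemma VIn.congr_ball {N : ℕ} {v w : ℂ → Fin N → ℂ} {c : ℂ} {ρ : ℝ} (hρ : 0 < ρ)
    (h : VIn (extAlg c) v) (e : ∀ z ∈ Metric.closedBall c ρ, z ≠ c → v z = w z) :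
    VIn (extAlg c) w := fun μ => ext_congr (h μ) <| by
  filter_upwards [eventually_punct hρ] with z hz
  rw [e z hz.1 hz.2]

lemma MIn.congr_ball {N : ℕ} {v w : ℂ → Mat N} {c : ℂ} {ρ : ℝ} (hρ : 0 < ρ)
    (h : MIn (extAlg c) v) (e : ∀ z ∈ Metric.closedBall c ρ, z ≠ c → v z = w z) :
    MIn (extAlg c) w := fun i j => ext_congr (h i j) <| by
  filter_upwards [eventually_punct hρ] with z hz
  rw [e z hz.1 hz.2]

lemma tendsto_vecMul {N : ℕ} {l : Filter ℂ} {v : ℂ → Fin N → ℂ} {M : ℂ → Mat N} {M₀ : Mat N}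
    (hv : ∀ μ, Tendsto (fun z => v z μ) l (nhds 0)) (hM : Tendsto M l (nhds M₀)) (μ : Fin N) :
    Tendsto (fun z => Matrix.vecMul (v z) (M z) μ) l (nhds 0) := by
  have := tendsto_finsetSum Finset.univ fun ν _ =>
    (hv ν).mul (tendsto_pi_nhds.1 (tendsto_pi_nhds.1 hM ν) μ)
  simpa [Matrix.vecMul, dotProduct] using this

/-! ### The spaces `V`, `W` and the map `𝒢` through rational functions -/

/-- The configuration of disjoint disks with two radii. -/
structure Geo {n : ℕ} (cs : Fin n → ℂ) (r r' : Fin n → ℝ) : Prop where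
  inj : Function.Injective cs
  pos : ∀ i, 0 < r i
  lt : ∀ i, r i < r' i
  disj : ∀ i j, i ≠ j → r' i + r' j < dist (cs i) (cs j)

/-- Row vectors of rational functions with poles at the centers, vanishing at infinity. -/
def PolV {N n : ℕ} (cs : Fin n → ℂ) (p : ℂ → Fin N → ℂ) : Prop := ∀ μ, Pol cs (fun z => p z μ)

/-- A family of row vectors, the `i`-th analytic on the punctured closed disk of radius `r' i`
and extending analytically to its center: an element of `ℋ₊` given disk by disk. -/
def LP {N n : ℕ} (cs : Fin n → ℂ) (r' : Fin n → ℝ) (H : Fin n → ℂ → Fin N → ℂ) : Prop :=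
  ∀ i, (∀ z ∈ Metric.closedBall (cs i) (r' i), z ≠ cs i → VIn (anAlg z) (H i)) ∧
    VIn (extAlg (cs i)) (H i)

/-- Mutually inverse families of local matrices, analytic on the punctured closed disks and
meromorphic at the centers; the local forms of `S` and `S⁻¹`. -/
structure LocInv {N n : ℕ} (cs : Fin n → ℂ) (r' : Fin n → ℝ) (T Ti : Fin n → ℂ → Mat N) :
    Prop where
  an : ∀ i, ∀ z ∈ Metric.closedBall (cs i) (r' i), z ≠ cs i → MIn (anAlg z) (T i)
  ian : ∀ i, ∀ z ∈ Metric.closedBall (cs i) (r' i), z ≠ cs i → MIn (anAlg z) (Ti i)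
  mer : ∀ i, MIn (merAlg (cs i)) (T i)
  imer : ∀ i, MIn (merAlg (cs i)) (Ti i)
  mul : ∀ i, ∀ z ∈ Metric.closedBall (cs i) (r' i), z ≠ cs i → T i z * Ti i z = 1
  imul : ∀ i, ∀ z ∈ Metric.closedBall (cs i) (r' i), z ≠ cs i → Ti i z * T i z = 1

section Main

variable {N n : ℕ} {cs : Fin n → ℂ} {r r' : Fin n → ℝ} {T Ti : Fin n → ℂ → Mat N}

lemma PolV.add {p q : ℂ → Fin N → ℂ} (hp : PolV cs p) (hq : PolV cs q) :
    PolV cs (fun z => p z + q z) := fun μ => (hp μ).add (hq μ)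

lemma PolV.sub {p q : ℂ → Fin N → ℂ} (hp : PolV cs p) (hq : PolV cs q) :
    PolV cs (fun z => p z - q z) := fun μ => (hp μ).sub (hq μ)

lemma PolV.mer {p : ℂ → Fin N → ℂ} (hp : PolV cs p) (i : Fin n) : VIn (merAlg (cs i)) p :=
  fun μ => (hp μ).mer i

lemma Geo.pos' (g : Geo cs r r') (i : Fin n) : 0 < r' i := (g.pos i).trans (g.lt i)

lemma Geo.notMem (g : Geo cs r r') {i : Fin n} {z : ℂ} (hz : z ∈ Metric.closedBall (cs i) (r' i))
    {j : Fin n} (hij : j ≠ i) : r' j < dist z (cs j) := by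
  have h1 := g.disj i j hij.symm
  have h2 := Metric.mem_closedBall.1 hz
  have h3 := dist_triangle_left (cs i) (cs j) z
  linarith

lemma Geo.punct (g : Geo cs r r') {i : Fin n} {z : ℂ} (hz : z ∈ Metric.closedBall (cs i) (r' i))
    (hne : z ≠ cs i) : z ∉ Set.range cs := by
  rintro ⟨j, rfl⟩
  have := g.notMem hz (j := j) (fun h => hne (by rw [h]))
  rw [dist_self] at this
  exact absurd this (not_lt.2 (g.pos' j).le)

lemma Geo.sphere (g : Geo cs r r') {i : Fin n} {z : ℂ} (hz : z ∈ Metric.sphere (cs i) (r' i)) :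
    z ∈ ExtOf n cs r := by
  intro j
  by_cases h : j = i
  · subst h; rw [Metric.mem_sphere.1 hz]; exact g.lt j
  · exact (g.lt j).trans (g.notMem (Metric.sphere_subset_closedBall hz) h)

lemma Geo.ext_notMem (g : Geo cs r r') {z : ℂ} (hz : z ∈ ExtOf n cs r) : z ∉ Set.range cs := by
  rintro ⟨i, rfl⟩
  have := hz i
  rw [dist_self] at this
  exact absurd this (not_lt.2 (g.pos i).le)

lemma Geo.ext_mono (g : Geo cs r r') {z : ℂ} (hz : z ∈ ExtOf n cs r') : z ∈ ExtOf n cs r :=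
  fun i => (g.lt i).trans (hz i)

lemma PolV.an (g : Geo cs r r') {p : ℂ → Fin N → ℂ} (hp : PolV cs p) {i : Fin n} {z : ℂ}
    (hz : z ∈ Metric.closedBall (cs i) (r' i)) (hne : z ≠ cs i) : VIn (anAlg z) p :=
  fun μ => (hp μ).an z (g.punct hz hne)

lemma PolV.ident {ρ : Fin n → ℝ} {p q : ℂ → Fin N → ℂ} (hp : PolV cs p) (hq : PolV cs q)
    (h : Set.EqOn p q (ExtOf n cs ρ)) : ∀ z ∉ Set.range cs, p z = q z := fun z hz =>
  funext fun μ => pol_ident (hp μ) (hq μ) (fun w hw => by rw [h hw]) z hz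

/-- Any local meromorphic data are cancelled, modulo extendable terms, by a rational function. -/
lemma exists_polV (g : Geo cs r r') (G : Fin n → ℂ → Fin N → ℂ)
    (hG : ∀ i, VIn (merAlg (cs i)) (G i)) :
    ∃ q : ℂ → Fin N → ℂ, PolV cs q ∧ ∀ i, VIn (extAlg (cs i)) (fun z => G i z + q z) := by
  choose q hq h using fun μ => exists_pol g.inj (fun i z => G i z μ) fun i => hG i μ
  refine ⟨fun z μ => -q μ z, fun μ => (hq μ).neg, fun i μ => ?_⟩
  have h1 := h μ i
  simp only [sub_eq_add_neg] at h1
  exact h1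

/-- If `q` cancels the boundary data `G` modulo extendable terms then `C₋[G] = q`. -/
lemma Cm_eq (g : Geo cs r r') {ρ : Fin n → ℝ} (hρ : ∀ i, 0 < ρ i) (hρ' : ∀ i, ρ i ≤ r' i)
    {F : ℂ → Fin N → ℂ} {G : Fin n → ℂ → Fin N → ℂ} {q : ℂ → Fin N → ℂ} (hq : PolV cs q)
    (hG : ∀ i, ∀ z ∈ Metric.closedBall (cs i) (r' i), z ≠ cs i → VIn (anAlg z) (G i))
    (hext : ∀ i, VIn (extAlg (cs i)) (fun z => G i z + q z))
    (hF : ∀ i, ∀ ζ ∈ Metric.sphere (cs i) (ρ i), F ζ = G i ζ) :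
    Set.EqOn (Cm N n cs ρ F) q (ExtOf n cs ρ) := by
  intro z hz
  ext μ
  have h := cauchy_main g.inj hρ (fun i j hij => by
      have := g.notMem (i := j) (z := cs j) (Metric.mem_closedBall_self (g.pos' j).le) hij
      rw [dist_comm]
      exact (hρ' i).trans_lt this) (F := fun ζ => F ζ μ) (G := fun i z => G i z μ) (hq μ).neg
    (fun i z hz hne => hG i z (Metric.closedBall_subset_closedBall (hρ' i) hz) hne μ)
    (fun i => by simp only [sub_neg_eq_add]; exact hext i μ) (fun i ζ hζ => by rw [hF i ζ hζ]) hz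
  rw [neg_neg] at h
  exact h

/-- Local analytic data on the disjoint disks are the restriction of one element of `ℋ₊`. -/
lemma glue (g : Geo cs r r') {H : Fin n → ℂ → Fin N → ℂ} (hH : LP cs r' H) :
    ∃ h, Hplus N n cs r' h ∧
      ∀ i, ∀ z ∈ Metric.closedBall (cs i) (r' i), z ≠ cs i → h z = H i z := by
  -- The disks are separated by the open cells of the additively weighted Voronoi diagram.
  set cell : Fin n → Set ℂ := fun i =>
    ⋂ j, {z | j ≠ i → dist z (cs i) - r' i < dist z (cs j) - r' j} with hcell
  have hop : ∀ i, IsOpen (cell i) := fun i => isOpen_iInter_of_finite fun j => by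
    by_cases h : j = i
    · simp [h]
    · simp only [ne_eq, h, not_false_eq_true, true_imp_iff]
      exact isOpen_lt (by fun_prop) (by fun_prop)
  have hsub : ∀ i, ∀ z ∈ Metric.closedBall (cs i) (r' i), z ∈ cell i := by
    intro i z hz
    refine Set.mem_iInter.2 fun j hj => ?_
    have h1 := g.notMem hz hj
    have h2 := Metric.mem_closedBall.1 hz
    linarith
  have hdis : ∀ i j z, i ≠ j → z ∈ cell i → z ∉ cell j := by
    intro i j z hij h1 h2
    have h3 := Set.mem_iInter.1 h1 j hij.symm
    have h4 := Set.mem_iInter.1 h2 i hij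
    linarith
  let h : ℂ → Fin N → ℂ := fun z μ =>
    ∑ i, if z ∈ cell i then fill {cs i} (fun w => H i w μ) z else 0
  have hval : ∀ i, ∀ z ∈ cell i, ∀ μ, h z μ = fill {cs i} (fun w => H i w μ) z := by
    intro i z hz μ
    simp only [h]
    rw [Finset.sum_eq_single i]
    · rw [if_pos hz]
    · intro j _ hj
      rw [if_neg (hdis i j z hj.symm hz)]
    · simp
  refine ⟨h, fun μ i z hz => ?_, fun i z hz hne => ?_⟩
  · have h1 : AnalyticAt ℂ (fill {cs i} (fun w => H i w μ)) z := by
      by_cases hzc : z = cs i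
      · subst hzc
        exact fill_an_of_ext (Set.finite_singleton _) rfl ((hH i).2 μ)
      · exact fill_an (Set.finite_singleton _) hzc ((hH i).1 z hz hzc μ)
    refine h1.congr ?_
    filter_upwards [(hop i).mem_nhds (hsub i z hz)] with w hw
    rw [hval i w hw]
  · ext μ
    rw [hval i z (hsub i z hz), fill_eq (by simpa using hne)]

/-- Membership in `C₋[ℋ₊·T]`, in terms of rational functions. -/
lemma image_char (g : Geo cs r r') {Tg : ℂ → Mat N}
    (hTan : ∀ i, ∀ z ∈ Metric.closedBall (cs i) (r' i), z ≠ cs i → MIn (anAlg z) (T i))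
    (hTm : ∀ i, MIn (merAlg (cs i)) (T i))
    (hTg : ∀ i, ∀ z ∈ Metric.closedBall (cs i) (r' i), Tg z = T i z) (v : ℂ → Fin N → ℂ) :
    (∃ h, Hplus N n cs r' h ∧
      Set.EqOn v (Cm N n cs r (fun ζ => Matrix.vecMul (h ζ) (Tg ζ))) (ExtOf n cs r)) ↔
    ∃ p, PolV cs p ∧ Set.EqOn v p (ExtOf n cs r) ∧ ∃ H, LP cs r' H ∧
      ∀ i, VIn (extAlg (cs i)) (fun z => p z + Matrix.vecMul (H i z) (T i z)) := by
  have hsp : ∀ i, ∀ ζ ∈ Metric.sphere (cs i) (r i),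
      ζ ∈ Metric.closedBall (cs i) (r' i) ∧ ζ ≠ cs i := fun i ζ hζ =>
    ⟨Metric.closedBall_subset_closedBall (g.lt i).le (Metric.sphere_subset_closedBall hζ),
      sub_ne_zero.1 (ne_center (g.pos i) hζ)⟩
  constructor
  · rintro ⟨h, hh, hv⟩
    have hself : ∀ i, cs i ∈ Metric.closedBall (cs i) (r' i) := fun i =>
      Metric.mem_closedBall_self (g.pos' i).le
    have hha : ∀ i, ∀ z ∈ Metric.closedBall (cs i) (r' i), VIn (anAlg z) h :=
      fun i z hz μ => hh μ i z hz
    obtain ⟨q, hq, hqe⟩ := exists_polV g (fun i z => Matrix.vecMul (h z) (T i z)) fun i =>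
      VIn.vecMul (fun μ => AnalyticAt.meromorphicAt (hha i _ (hself i) μ)) (hTm i)
    have := Cm_eq g g.pos (fun i => (g.lt i).le) (F := fun ζ => Matrix.vecMul (h ζ) (Tg ζ)) hq
      (fun i z hz hne => (hha i z hz).vecMul (hTan i z hz hne)) hqe
      fun i ζ hζ => by rw [hTg i ζ (hsp i ζ hζ).1]
    refine ⟨q, hq, fun z hz => (hv hz).trans (this hz), fun _ => h, fun i =>
      ⟨fun z hz _ => hha i z hz, (hha i _ (hself i)).ext_of_an⟩, fun i => ?_⟩
    simpa only [add_comm] using hqe i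
  · rintro ⟨p, hp, hv, H, hH, he⟩
    obtain ⟨h, hh, hhH⟩ := glue g hH
    refine ⟨h, hh, fun z hz => (hv hz).trans (Eq.symm ?_)⟩
    refine Cm_eq g g.pos (fun i => (g.lt i).le) (G := fun i z => Matrix.vecMul (H i z) (T i z)) hp
      (fun i z hz hne => ((hH i).1 z hz hne).vecMul (hTan i z hz hne))
      (fun i => by simpa only [add_comm] using he i) (fun i ζ hζ => ?_) hz
    rw [hTg i ζ (hsp i ζ hζ).1, hhH i ζ (hsp i ζ hζ).1 (hsp i ζ hζ).2]

/-- `𝒢(v) = q` as soon as `v = p` is rational and `p·T + q` extends to the centers. -/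
lemma Gmap_eq (g : Geo cs r r') {Tg : ℂ → Mat N}
    (hTan : ∀ i, ∀ z ∈ Metric.closedBall (cs i) (r' i), z ≠ cs i → MIn (anAlg z) (T i))
    (hTg : ∀ i, ∀ z ∈ Metric.closedBall (cs i) (r' i), Tg z = T i z)
    {v p q : ℂ → Fin N → ℂ} (hp : PolV cs p) (hv : Set.EqOn v p (ExtOf n cs r)) (hq : PolV cs q)
    (he : ∀ i, VIn (extAlg (cs i)) (fun z => Matrix.vecMul (p z) (T i z) + q z)) :
    Set.EqOn (Cm N n cs r' (fun ζ => Matrix.vecMul (v ζ) (Tg ζ))) q (ExtOf n cs r') :=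
  Cm_eq g g.pos' (fun _ => le_rfl) hq
    (fun i z hz hne => (hp.an g hz hne).vecMul (hTan i z hz hne)) he fun i ζ hζ => by
    rw [hTg i ζ (Metric.sphere_subset_closedBall hζ), hv (g.sphere hζ)]

/-- `𝒢` maps `V` into `W`: the vector `v + h·S⁻¹`, analytic at the centers, represents `𝒢 v` as an
element of `C₋[ℋ₊·S]`. -/
lemma part_one (g : Geo cs r r') (L : LocInv cs r' T Ti) {p : ℂ → Fin N → ℂ} (hp : PolV cs p)
    {H : Fin n → ℂ → Fin N → ℂ} (hH : LP cs r' H)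
    (he : ∀ i, VIn (extAlg (cs i)) (fun z => p z + Matrix.vecMul (H i z) (Ti i z))) :
    ∃ q, PolV cs q ∧ (∀ i, VIn (extAlg (cs i)) (fun z => Matrix.vecMul (p z) (T i z) + q z)) ∧
      ∃ H', LP cs r' H' ∧
        ∀ i, VIn (extAlg (cs i)) (fun z => q z + Matrix.vecMul (H' i z) (T i z)) := by
  obtain ⟨q, hq, hqe⟩ := exists_polV g (fun i z => Matrix.vecMul (p z) (T i z)) fun i =>
    (hp.mer i).vecMul (L.mer i)
  refine ⟨q, hq, hqe, fun i z => p z + Matrix.vecMul (H i z) (Ti i z), fun i =>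
    ⟨fun z hz hne => (hp.an g hz hne).add (((hH i).1 z hz hne).vecMul (L.ian i z hz hne)), he i⟩,
    fun i => ?_⟩
  refine VIn.congr_ball (g.pos' i) ((hqe i).add (hH i).2) fun z hz hne => ?_
  rw [Matrix.add_vecMul, Matrix.vecMul_vecMul, L.imul i z hz hne, Matrix.vecMul_one]
  abel

/-- The conditions on a dressing matrix, relative to the local forms `T`, `Ti` of `S`, `S⁻¹`. -/
structure Dr (cs : Fin n → ℂ) (T Ti : Fin n → ℂ → Mat N) (R Rinv : ℂ → Mat N) : Prop where
  an : ∀ z ∉ Set.range cs, MIn (anAlg z) R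
  ian : ∀ z ∉ Set.range cs, MIn (anAlg z) Rinv
  mul : ∀ z ∉ Set.range cs, R z * Rinv z = 1
  imul : ∀ z ∉ Set.range cs, Rinv z * R z = 1
  lim : Tendsto R (Bornology.cobounded ℂ) (nhds 1)
  plus : ∀ i, MIn (extAlg (cs i)) (fun z => R z * T i z)
  iplus : ∀ i, MIn (extAlg (cs i)) (fun z => Ti i z * Rinv z)

lemma off_cob (cs : Fin n → ℂ) : ∀ᶠ z in Bornology.cobounded ℂ, z ∉ Set.range cs :=
  Bornology.isBounded_def.1 (Set.finite_range cs).isBounded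

lemma Dr.ilim {R Rinv : ℂ → Mat N} (D : Dr cs T Ti R Rinv) :
    Tendsto Rinv (Bornology.cobounded ℂ) (nhds 1) := by
  have h1 : Tendsto (fun z => ((R z).det)⁻¹ • (R z).adjugate) (Bornology.cobounded ℂ)
      (nhds (((1 : Mat N).det)⁻¹ • (1 : Mat N).adjugate)) := by
    have hd : Tendsto (fun z => (R z).det) (Bornology.cobounded ℂ) (nhds (1 : Mat N).det) :=
      ((continuous_id.matrix_det).tendsto (1 : Mat N)).comp D.lim
    have ha : Tendsto (fun z => (R z).adjugate) (Bornology.cobounded ℂ)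
        (nhds (1 : Mat N).adjugate) :=
      ((continuous_id.matrix_adjugate).tendsto (1 : Mat N)).comp D.lim
    exact (hd.inv₀ (by simp)).smul ha
  simp only [Matrix.det_one, inv_one, Matrix.adjugate_one, one_smul] at h1
  refine h1.congr' ?_
  filter_upwards [off_cob cs] with z hz
  have h2 : (R z)⁻¹ = Rinv z := Matrix.inv_eq_left_inv (D.imul z hz)
  rw [← h2, Matrix.inv_def, Ring.inverse_eq_inv']

/-- With a dressing, a rational row vector `p` for which `p·S` extends to the centers vanishes:
`p·R⁻¹ = (p·S)·R₊⁻¹` is entire and vanishes at infinity. -/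
lemma Dr.inj (g : Geo cs r r') (L : LocInv cs r' T Ti) {R Rinv : ℂ → Mat N}
    (D : Dr cs T Ti R Rinv) {p : ℂ → Fin N → ℂ} (hp : PolV cs p)
    (he : ∀ i, VIn (extAlg (cs i)) (fun z => Matrix.vecMul (p z) (T i z))) :
    ∀ z ∉ Set.range cs, p z = 0 := by
  have hu : ∀ i, VIn (extAlg (cs i)) (fun z => Matrix.vecMul (p z) (Rinv z)) := fun i => by
    refine VIn.congr_ball (g.pos' i) ((he i).vecMul (D.iplus i)) fun z hz hne => ?_
    rw [Matrix.vecMul_vecMul, ← mul_assoc, L.mul i z hz hne, one_mul]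
  have h0 : ∀ z ∉ Set.range cs, Matrix.vecMul (p z) (Rinv z) = 0 := fun z hz => by
    ext μ
    refine liouville (Set.finite_range cs) (f := fun z => Matrix.vecMul (p z) (Rinv z) μ)
      (fun w hw => ?_) ?_ (tendsto_vecMul (fun ν => (hp ν).lim) D.ilim μ) z hz
    · exact VIn.vecMul (A := anAlg w) (fun ν => (hp ν).an w hw) (D.ian w hw) μ
    · rintro _ ⟨i, rfl⟩
      exact hu i μ
  intro z hz
  have h1 := congrArg (fun x => Matrix.vecMul x (R z)) (h0 z hz)
  simpa [Matrix.vecMul_vecMul, D.imul z hz] using h1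

/-- The explicit inverse: with `u = C₋[q·R₊⁻¹]`, the vector `u·R` lies in `V` and `𝒢(u·R) = q`. -/
lemma Dr.inverse (g : Geo cs r r') (L : LocInv cs r' T Ti) {R Rinv : ℂ → Mat N}
    (D : Dr cs T Ti R Rinv) {q : ℂ → Fin N → ℂ} (hq : PolV cs q)
    {H : Fin n → ℂ → Fin N → ℂ} (hH : LP cs r' H)
    (he : ∀ i, VIn (extAlg (cs i)) (fun z => q z + Matrix.vecMul (H i z) (T i z))) :
    ∃ u, PolV cs u ∧
      (∀ i, VIn (extAlg (cs i))
        (fun z => Matrix.vecMul (q z) (Ti i z * Rinv z) + u z)) ∧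
      PolV cs (fun z => Matrix.vecMul (u z) (R z)) ∧
      (∀ i, VIn (extAlg (cs i))
        (fun z => Matrix.vecMul (Matrix.vecMul (u z) (R z)) (T i z) + q z)) ∧
      ∃ H', LP cs r' H' ∧ ∀ i, VIn (extAlg (cs i))
        (fun z => Matrix.vecMul (u z) (R z) + Matrix.vecMul (H' i z) (Ti i z)) := by
  obtain ⟨u, hu, hue⟩ := exists_polV g (fun i z => Matrix.vecMul (q z) (Ti i z * Rinv z))
    fun i => (hq.mer i).vecMul (D.iplus i).mer_of_ext
  have hRm : ∀ i, MIn (merAlg (cs i)) R := fun i a b => by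
    refine MeromorphicAt.congr ((D.plus i).mer_of_ext.mul (L.imer i) a b) ?_
    filter_upwards [eventually_punct (g.pos' i)] with z hz
    rw [mul_assoc, L.mul i z hz.1 hz.2, mul_one]
  refine ⟨u, hu, hue, fun μ => ⟨fun z hz => ?_, fun i => ?_, ?_⟩, fun i => ?_,
    fun i z => (q z + Matrix.vecMul (H i z) (T i z)) -
      Matrix.vecMul (Matrix.vecMul (q z) (Ti i z * Rinv z) + u z) (R z * T i z),
    fun i => ⟨fun z hz hne => ?_, ?_⟩, fun i => ?_⟩
  · exact VIn.vecMul (A := anAlg z) (fun ν => (hu ν).an z hz) (D.an z hz) μ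
  · exact (hu.mer i).vecMul (hRm i) μ
  · exact tendsto_vecMul (fun ν => (hu ν).lim) D.lim μ
  · refine VIn.congr_ball (g.pos' i) ((hue i).vecMul (D.plus i)) fun z hz hne => ?_
    have h1 : Ti i z * Rinv z * (R z * T i z) = 1 := by
      rw [mul_assoc, ← mul_assoc (Rinv z), D.imul z (g.punct hz hne), one_mul, L.imul i z hz hne]
    rw [Matrix.add_vecMul, Matrix.vecMul_vecMul, Matrix.vecMul_vecMul, h1, Matrix.vecMul_one,
      add_comm]
  · have hRz := D.an z (g.punct hz hne)
    have hqz := hq.an g hz hne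
    exact (hqz.add (((hH i).1 z hz hne).vecMul (L.an i z hz hne))).sub
      (((hqz.vecMul ((L.ian i z hz hne).mul (D.ian z (g.punct hz hne)))).add
        (hu.an g hz hne)).vecMul (hRz.mul (L.an i z hz hne)))
  · exact (he i).sub ((hue i).vecMul (D.plus i))
  · refine VIn.congr_ball (g.pos' i) (hH i).2 fun z hz hne => ?_
    have h1 : Ti i z * Rinv z * (R z * T i z) = 1 := by
      rw [mul_assoc, ← mul_assoc (Rinv z), D.imul z (g.punct hz hne), one_mul, L.imul i z hz hne]
    have h2 : R z * T i z * Ti i z = R z := by rw [mul_assoc, L.mul i z hz hne, mul_one]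
    dsimp only
    rw [Matrix.add_vecMul, Matrix.vecMul_vecMul _ _ (R z * T i z), h1, Matrix.vecMul_one,
      Matrix.sub_vecMul, Matrix.add_vecMul, Matrix.add_vecMul, Matrix.vecMul_vecMul _ _ (Ti i z),
      Matrix.vecMul_vecMul _ _ (Ti i z), h2, L.mul i z hz hne, Matrix.vecMul_one]
    abel

lemma prod_zpow_sum {ι : Type*} (s : Finset ι) {x : ℂ} (hx : x ≠ 0) (τ : ι → ℤ) :
    ∏ j ∈ s, x ^ τ j = x ^ ∑ j ∈ s, τ j := by
  induction s using Finset.induction_on with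
  | empty => simp
  | insert a s ha ih => rw [Finset.prod_insert ha, Finset.sum_insert ha, ih, zpow_add₀ hx]

lemma tendsto_prod_zpow {τ : Fin n → ℤ} (hτ : ∑ j, τ j = 0) :
    Tendsto (fun z : ℂ => ∏ j, (z - cs j) ^ τ j) (Bornology.cobounded ℂ) (nhds 1) := by
  have h1 : ∀ j, Tendsto (fun z : ℂ => (1 - cs j * z⁻¹) ^ τ j) (Bornology.cobounded ℂ)
      (nhds 1) := fun j => by
    have h2 : Tendsto (fun z : ℂ => 1 - cs j * z⁻¹) (Bornology.cobounded ℂ) (nhds 1) := by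
      simpa using ((tendsto_inv₀_cobounded (α := ℂ)).const_mul (cs j)).const_sub 1
    simpa using h2.zpow₀ (τ j) (Or.inl one_ne_zero)
  have h3 := tendsto_finsetProd Finset.univ fun j _ => h1 j
  simp only [Finset.prod_const_one] at h3
  refine h3.congr' ?_
  have h0 : ∀ᶠ z in Bornology.cobounded ℂ, z ∉ ({0} : Set ℂ) :=
    Bornology.isBounded_def.1 Bornology.isBounded_singleton
  filter_upwards [h0] with z hz
  have hz' : z ≠ 0 := by simpa using hz
  have h4 : ∏ j, z ^ τ j = 1 := by rw [prod_zpow_sum _ hz', hτ, zpow_zero]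
  calc ∏ j, (1 - cs j * z⁻¹) ^ τ j
      = (∏ j, (1 - cs j * z⁻¹) ^ τ j) * ∏ j, z ^ τ j := by rw [h4, mul_one]
    _ = ∏ j, (z - cs j) ^ τ j := by
      rw [← Finset.prod_mul_distrib]
      refine Finset.prod_congr rfl fun j _ => ?_
      rw [← mul_zpow]
      congr 1
      field_simp

lemma prod_zpow_an (τ : Fin n → ℤ) (s : Finset (Fin n)) {z : ℂ} (hz : ∀ j ∈ s, z ≠ cs j) :
    AnalyticAt ℂ (fun z : ℂ => ∏ j ∈ s, (z - cs j) ^ τ j) z :=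
  Finset.analyticAt_fun_prod _ fun j hj =>
    (analyticAt_id.sub analyticAt_const).zpow (sub_ne_zero.2 (hz j hj))

/-- A matrix `R → 1` for which `R·S` extends to the centers is a dressing when `S` has total
index zero: `det R · ∏ (z-c)^{Tr N_c}` is entire and tends to `1`, so it is identically `1`, and
both `R⁻¹` and `(R·S)⁻¹` are given by Cramer's rule without poles. -/
lemma exists_inverse (g : Geo cs r r') (L : LocInv cs r' T Ti) {τ : Fin n → ℤ}
    (hτ : ∑ j, τ j = 0)
    (hdet : ∀ i, ∃ γ : ℂ → ℂ, ExtAt γ (cs i) ∧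
      ∀ z ∈ Metric.closedBall (cs i) (r' i), z ≠ cs i →
        (T i z).det * γ z = (z - cs i) ^ τ i)
    {R : ℂ → Mat N} (han : ∀ z ∉ Set.range cs, MIn (anAlg z) R)
    (hlim : Tendsto R (Bornology.cobounded ℂ) (nhds 1))
    (hplus : ∀ i, MIn (extAlg (cs i)) (fun z => R z * T i z)) :
    ∃ Rinv, Dr cs T Ti R Rinv := by
  choose γ hγ hγd using hdet
  set P : ℂ → ℂ := fun z => ∏ j, (z - cs j) ^ τ j with hP
  have hPan : ∀ z ∉ Set.range cs, AnalyticAt ℂ P z := fun z hz =>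
    prod_zpow_an τ Finset.univ fun j _ h => hz ⟨j, h.symm⟩
  let s : Fin n → ℂ → ℂ := fun i z => γ i z * ∏ j ∈ Finset.univ.erase i, (z - cs j) ^ τ j
  have hs : ∀ i, ExtAt (s i) (cs i) := fun i =>
    (extAlg (cs i)).mul_mem (hγ i) (extAt_of_an (prod_zpow_an τ _ fun j hj h =>
      Finset.ne_of_mem_erase hj (g.inj h).symm))
  have hds : ∀ i, ∀ z ∈ Metric.closedBall (cs i) (r' i), z ≠ cs i →
      (R z * T i z).det * s i z = (R z).det * P z := by
    intro i z hz hne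
    simp only [s, hP]
    rw [← Finset.mul_prod_erase _ _ (Finset.mem_univ i), ← hγd i z hz hne, Matrix.det_mul]
    ring
  have hone : ∀ z ∉ Set.range cs, (R z).det * P z = 1 := by
    refine liouville (Set.finite_range cs) (fun z hz => ?_) ?_ ?_
    · exact AnalyticAt.mul (MIn.det (A := anAlg z) (han z hz)) (hPan z hz)
    · rintro _ ⟨i, rfl⟩
      refine ext_congr (mul_mem'' (A := extAlg (cs i)) (hplus i).det (hs i)) ?_
      filter_upwards [eventually_punct (g.pos' i)] with z hz
      exact hds i z hz.1 hz.2
    · have hd : Tendsto (fun z => (R z).det) (Bornology.cobounded ℂ) (nhds (1 : Mat N).det) :=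
        ((continuous_id.matrix_det).tendsto (1 : Mat N)).comp hlim
      simpa using hd.mul (tendsto_prod_zpow (cs := cs) hτ)
  have hr : ∀ z ∉ Set.range cs, R z * (P z • (R z).adjugate) = 1 := fun z hz => by
    rw [Matrix.mul_smul, Matrix.mul_adjugate, smul_smul, mul_comm, hone z hz, one_smul]
  have hl : ∀ z ∉ Set.range cs, (P z • (R z).adjugate) * R z = 1 := fun z hz => by
    rw [Matrix.smul_mul, Matrix.adjugate_mul, smul_smul, mul_comm, hone z hz, one_smul]
  refine ⟨fun z => P z • (R z).adjugate, han, fun z hz => ?_, hr, hl, hlim, hplus, fun i => ?_⟩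
  · exact MIn.smul (hPan z hz) (han z hz).adjugate
  · refine MIn.congr_ball (g.pos' i) (MIn.smul (hs i) (hplus i).adjugate) fun z hz hne => ?_
    have hz' := g.punct hz hne
    -- Both sides are inverses of `R·S` on the punctured disk.
    have h1 : (R z * T i z) * (s i z • (R z * T i z).adjugate) = 1 := by
      rw [Matrix.mul_smul, Matrix.mul_adjugate, smul_smul, mul_comm, hds i z hz hne, hone z hz',
        one_smul]
    have h2 : Ti i z * (P z • (R z).adjugate) * (R z * T i z) = 1 := by
      rw [mul_assoc, ← mul_assoc (P z • (R z).adjugate), hl z hz', one_mul, L.imul i z hz hne]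
    exact (left_inv_eq_right_inv h2 h1).symm

/-- Surjectivity of `𝒢 : V → W`, in rational form and applied to the vectors `C₋[-e_k·S]`,
produces the rows `e_k + p_k` of a dressing. -/
lemma exists_dressing (g : Geo cs r r') (L : LocInv cs r' T Ti) {τ : Fin n → ℤ}
    (hτ : ∑ j, τ j = 0)
    (hdet : ∀ i, ∃ γ : ℂ → ℂ, ExtAt γ (cs i) ∧
      ∀ z ∈ Metric.closedBall (cs i) (r' i), z ≠ cs i →
        (T i z).det * γ z = (z - cs i) ^ τ i)
    (hsurj : ∀ q : ℂ → Fin N → ℂ, PolV cs q → ∀ H, LP cs r' H →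
      (∀ i, VIn (extAlg (cs i)) (fun z => q z + Matrix.vecMul (H i z) (T i z))) →
      ∃ p, PolV cs p ∧ ∀ i, VIn (extAlg (cs i)) (fun z => Matrix.vecMul (p z) (T i z) + q z)) :
    ∃ R Rinv, Dr cs T Ti R Rinv := by
  have key : ∀ k : Fin N, ∃ p : ℂ → Fin N → ℂ, PolV cs p ∧
      ∀ i, VIn (extAlg (cs i)) (fun z => Matrix.vecMul (Pi.single k 1 + p z) (T i z)) := by
    intro k
    have hc : ∀ A : Subalgebra ℂ (ℂ → ℂ), VIn A (fun _ => -(Pi.single k 1 : Fin N → ℂ)) :=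
      fun A μ => const_mem' _
    obtain ⟨q, hq, hqe⟩ := exists_polV g
      (fun i z => Matrix.vecMul (-(Pi.single k 1 : Fin N → ℂ)) (T i z)) fun i =>
        (hc _).vecMul (L.mer i)
    obtain ⟨p, hp, hpe⟩ := hsurj q hq (fun _ _ => -(Pi.single k 1 : Fin N → ℂ))
      (fun i => ⟨fun z _ _ => hc _, hc _⟩) fun i => by simpa only [add_comm] using hqe i
    refine ⟨p, hp, fun i => ?_⟩
    refine VIn.congr_ball (g.pos' i) ((hpe i).sub (hqe i)) fun z _ _ => ?_
    rw [Matrix.add_vecMul, Matrix.neg_vecMul]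
    abel
  choose p hp hpe using key
  refine ⟨fun z => Matrix.of fun k => Pi.single k 1 + p k z,
    exists_inverse g L hτ hdet (fun z hz k μ => ?_) ?_ fun i k μ => ?_⟩
  · exact (anAlg z).add_mem (const_mem' _) ((hp k μ).an z hz)
  · refine tendsto_pi_nhds.2 fun k => tendsto_pi_nhds.2 fun μ => ?_
    have h1 := ((hp k μ).lim).const_add ((Pi.single k 1 : Fin N → ℂ) μ)
    have h2 : (Pi.single k 1 : Fin N → ℂ) μ + 0 = (1 : Mat N) k μ := by
      rw [add_zero, Matrix.one_apply, Pi.single_apply]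
      simp only [eq_comm]
    rw [h2] at h1
    exact h1
  · exact hpe k i μ

end Main

/-! ### The local forms of `S` and `S⁻¹` -/

section Local

variable {N n : ℕ} {cs : Fin n → ℂ} {r r' : Fin n → ℝ} {Γ Γinv : ℂ → Mat N}
  {Nc : Fin n → Fin N → ℤ}

/-- `S` near the center `cs i`. -/
def Sl (cs : Fin n → ℂ) (Nc : Fin n → Fin N → ℤ) (Γ : ℂ → Mat N) (i : Fin n) (z : ℂ) : Mat N :=
  Γ z * Matrix.diagonal fun μ => (z - cs i) ^ Nc i μ

/-- `S⁻¹` near the center `cs i`. -/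
def Sil (cs : Fin n → ℂ) (Nc : Fin n → Fin N → ℤ) (Γinv : ℂ → Mat N) (i : Fin n) (z : ℂ) :
    Mat N :=
  (Matrix.diagonal fun μ => (z - cs i) ^ (-(Nc i μ))) * Γinv z

lemma Geo.prod_ite (g : Geo cs r r') {i : Fin n} {z : ℂ}
    (hz : z ∈ Metric.closedBall (cs i) (r' i)) (f : Fin n → ℂ) :
    (∏ j, if z ∈ Metric.closedBall (cs j) (r' j) then f j else 1) = f i := by
  rw [Finset.prod_eq_single i]
  · rw [if_pos hz]
  · intro j _ hj
    rw [if_neg fun h => absurd (Metric.mem_closedBall.1 h) (not_le.2 (g.notMem hz hj))]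
  · simp

lemma Sfun_eq (g : Geo cs r r') (i : Fin n) (z : ℂ) (hz : z ∈ Metric.closedBall (cs i) (r' i)) :
    Sfun N n cs r' Nc Γ z = Sl cs Nc Γ i z := by
  simp only [Sfun, Dloc, Sl, g.prod_ite hz fun j => (z - cs j) ^ Nc j _]

lemma Sinv_eq (g : Geo cs r r') (i : Fin n) (z : ℂ) (hz : z ∈ Metric.closedBall (cs i) (r' i)) :
    Sinv N n cs r' Nc Γinv z = Sil cs Nc Γinv i z := by
  simp only [Sinv, Dlocinv, Sil, g.prod_ite hz fun j => (z - cs j) ^ (-(Nc j _))]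

lemma diag_an (N' : Fin N → ℤ) {c z : ℂ} (h : z ≠ c) :
    MIn (anAlg z) (fun w => Matrix.diagonal fun μ => (w - c) ^ N' μ) :=
  MIn.diagonal fun _ => (analyticAt_id.sub analyticAt_const).zpow (sub_ne_zero.2 h)

lemma diag_mer (N' : Fin N → ℤ) (c : ℂ) :
    MIn (merAlg c) (fun w => Matrix.diagonal fun μ => (w - c) ^ N' μ) :=
  MIn.diagonal fun _ => ((MeromorphicAt.id c).sub (MeromorphicAt.const _ _)).zpow _

lemma diag_mul (N' : Fin N → ℤ) {x : ℂ} (h : x ≠ 0) :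
    (Matrix.diagonal fun μ => x ^ N' μ) * (Matrix.diagonal fun μ => x ^ (-N' μ)) = (1 : Mat N) := by
  rw [Matrix.diagonal_mul_diagonal, ← Matrix.diagonal_one]
  congr 1; ext μ
  rw [← zpow_add₀ h, add_neg_cancel, zpow_zero]

lemma diag_mul' (N' : Fin N → ℤ) {x : ℂ} (h : x ≠ 0) :
    (Matrix.diagonal fun μ => x ^ (-N' μ)) * (Matrix.diagonal fun μ => x ^ N' μ) = (1 : Mat N) := by
  simpa using diag_mul (fun μ => -N' μ) h

lemma locInv (g : Geo cs r r')
    (hΓ : ∀ i, ∀ z ∈ Metric.closedBall (cs i) (r' i), MIn (anAlg z) Γ)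
    (hΓinv : ∀ i, ∀ z ∈ Metric.closedBall (cs i) (r' i), MIn (anAlg z) Γinv)
    (hmul : ∀ i, ∀ z ∈ Metric.closedBall (cs i) (r' i), Γ z * Γinv z = 1 ∧ Γinv z * Γ z = 1) :
    LocInv cs r' (Sl cs Nc Γ) (Sil cs Nc Γinv) where
  an i z hz hne := (hΓ i z hz).mul (diag_an (Nc i) hne)
  ian i z hz hne := (diag_an (fun μ => -Nc i μ) hne).mul (hΓinv i z hz)
  mer i := (hΓ i _ (Metric.mem_closedBall_self (g.pos' i).le)).mer_of_an.mul (diag_mer (Nc i) _)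
  imer i := (diag_mer (fun μ => -Nc i μ) _).mul
    (hΓinv i _ (Metric.mem_closedBall_self (g.pos' i).le)).mer_of_an
  mul i z hz hne := by
    rw [Sl, Sil, mul_assoc, ← mul_assoc (Matrix.diagonal _), diag_mul _ (sub_ne_zero.2 hne),
      one_mul, (hmul i z hz).1]
  imul i z hz hne := by
    rw [Sl, Sil, mul_assoc, ← mul_assoc (Γinv z), (hmul i z hz).2, one_mul,
      diag_mul' _ (sub_ne_zero.2 hne)]

lemma hdet (g : Geo cs r r')
    (hΓinv : ∀ i, ∀ z ∈ Metric.closedBall (cs i) (r' i), MIn (anAlg z) Γinv)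
    (hmul : ∀ i, ∀ z ∈ Metric.closedBall (cs i) (r' i), Γ z * Γinv z = 1 ∧ Γinv z * Γ z = 1)
    (i : Fin n) : ∃ γ : ℂ → ℂ, ExtAt γ (cs i) ∧
      ∀ z ∈ Metric.closedBall (cs i) (r' i), z ≠ cs i →
        (Sl cs Nc Γ i z).det * γ z = (z - cs i) ^ (∑ μ, Nc i μ) := by
  refine ⟨fun z => (Γinv z).det, extAt_of_an
    (hΓinv i _ (Metric.mem_closedBall_self (g.pos' i).le)).det, fun z hz hne => ?_⟩
  have h1 : (Γ z).det * (Γinv z).det = 1 := by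
    rw [← Matrix.det_mul, (hmul i z hz).1, Matrix.det_one]
  rw [Sl, Matrix.det_mul, Matrix.det_diagonal,
    prod_zpow_sum _ (sub_ne_zero.2 hne), mul_right_comm, h1, one_mul]

lemma isDressing_iff {R Rinv : ℂ → Mat N} :
    IsDressing N n cs Nc Γ Γinv R Rinv ↔ Dr cs (Sl cs Nc Γ) (Sil cs Nc Γinv) R Rinv := by
  constructor
  · rintro ⟨h1, h2, h3, h4, h5, h6⟩
    refine ⟨h1, h2, fun z hz => (h3 z hz).1, fun z hz => (h3 z hz).2, h4, fun i => ?_, h6⟩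
    simp only [Sl, ← mul_assoc]
    exact h5 i
  · rintro ⟨h1, h2, h3, h3', h4, h5, h6⟩
    refine ⟨h1, h2, fun z hz => ⟨h3 z hz, h3' z hz⟩, h4, fun i => ?_, h6⟩
    have := h5 i
    simp only [Sl, ← mul_assoc] at this
    exact this

end Local

end Dress

open Dress in
/-- **Existence of the dressing matrix is equivalent to invertibility of the
finite-dimensional Toeplitz-type map `𝒢` (with explicit inverse).**
The map `𝒢 : v ↦ C₋[v·S]` sends `V = C₋[ℋ₊S⁻¹]` into `W = C₋[ℋ₊S]`; an
admissible dressing `R` exists **iff** `𝒢 : V → W` is bijective; and in that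
case, setting `R₊(z) := R(z)S(z)` on `𝔻`, the inverse is given by
`𝒢⁻¹(w) = C₋[w·R₊⁻¹]·R` for `w ∈ W`. -/
theorem dressing_exists_iff_G_bijective
    (N n : ℕ) (hN : 1 ≤ N)
    (cs : Fin n → ℂ) (hcs : Function.Injective cs)
    (r r' : Fin n → ℝ) (hr : ∀ i, 0 < r i) (hrr' : ∀ i, r i < r' i)
    (hdisj : ∀ i j, i ≠ j → r' i + r' j < dist (cs i) (cs j))
    (O : Set ℂ) (hO : IsOpen O) (hDO : ∀ i, Metric.closedBall (cs i) (r' i) ⊆ O)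
    (Γ Γinv : ℂ → Mat N)
    (hΓ : ∀ i j : Fin N, AnalyticOnNhd ℂ (fun z => Γ z i j) O)
    (hΓinv : ∀ i j : Fin N, AnalyticOnNhd ℂ (fun z => Γinv z i j) O)
    (hmul : ∀ z ∈ O, Γ z * Γinv z = 1 ∧ Γinv z * Γ z = 1)
    (Nc : Fin n → Fin N → ℤ) (htr : ∑ i, ∑ μ, Nc i μ = 0) :
    -- (1) `𝒢` maps `V` into `W`
    (∀ v, InV N n cs Nc Γinv r r' v →
      ∃ w, InW N n cs Nc Γ r r' w ∧
        Set.EqOn w (Gmap N n cs Nc Γ r' v) (ExtOf n cs r')) ∧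
    -- (2) an admissible dressing exists iff `𝒢 : V → W` is bijective
    ((∃ R Rinv : ℂ → Mat N, IsDressing N n cs Nc Γ Γinv R Rinv) ↔
      ((∀ v₁ v₂, InV N n cs Nc Γinv r r' v₁ → InV N n cs Nc Γinv r r' v₂ →
          Set.EqOn (Gmap N n cs Nc Γ r' v₁) (Gmap N n cs Nc Γ r' v₂) (ExtOf n cs r') →
          Set.EqOn v₁ v₂ (ExtOf n cs r)) ∧
        (∀ w, InW N n cs Nc Γ r r' w →
          ∃ v, InV N n cs Nc Γinv r r' v ∧
            Set.EqOn w (Gmap N n cs Nc Γ r' v) (ExtOf n cs r')))) ∧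
    -- (3) in that case the inverse is `𝒢⁻¹(w) = C₋[w·R₊⁻¹]·R`
    (∀ R Rinv : ℂ → Mat N, IsDressing N n cs Nc Γ Γinv R Rinv →
      ∀ w, InW N n cs Nc Γ r r' w →
        ∃ v, InV N n cs Nc Γinv r r' v ∧
          Set.EqOn v
            (fun z => Matrix.vecMul
              (Cm N n cs r' (fun ζ => Matrix.vecMul (w ζ)
                (Dlocinv N n cs r' Nc ζ * Γinv ζ * Rinv ζ)) z)
              (R z))
            (ExtOf n cs r') ∧
          Set.EqOn w (Gmap N n cs Nc Γ r' v) (ExtOf n cs r')) := by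
  have g : Geo cs r r' := ⟨hcs, hr, hrr', hdisj⟩
  have hΓ' : ∀ i, ∀ z ∈ Metric.closedBall (cs i) (r' i), MIn (anAlg z) Γ :=
    fun i z hz a b => hΓ a b z (hDO i hz)
  have hΓi' : ∀ i, ∀ z ∈ Metric.closedBall (cs i) (r' i), MIn (anAlg z) Γinv :=
    fun i z hz a b => hΓinv a b z (hDO i hz)
  have hm : ∀ i, ∀ z ∈ Metric.closedBall (cs i) (r' i), Γ z * Γinv z = 1 ∧ Γinv z * Γ z = 1 :=
    fun i z hz => hmul z (hDO i hz)
  have L : LocInv cs r' (Sl cs Nc Γ) (Sil cs Nc Γinv) := locInv g hΓ' hΓi' hm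
  have hV : ∀ v, InV N n cs Nc Γinv r r' v ↔ _ := image_char g L.ian L.imer (Sinv_eq g)
  have hW : ∀ w, InW N n cs Nc Γ r r' w ↔ _ := image_char g L.an L.mer (Sfun_eq g)
  have hG : ∀ {v p q : ℂ → Fin N → ℂ}, PolV cs p → Set.EqOn v p (ExtOf n cs r) → PolV cs q →
      (∀ i, VIn (extAlg (cs i)) (fun z => Matrix.vecMul (p z) (Sl cs Nc Γ i z) + q z)) →
      Set.EqOn (Gmap N n cs Nc Γ r' v) q (ExtOf n cs r') :=
    fun hp hv hq he => Gmap_eq g L.an (Sfun_eq g) hp hv hq he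
  have part3 : ∀ R Rinv : ℂ → Mat N, IsDressing N n cs Nc Γ Γinv R Rinv →
      ∀ w, InW N n cs Nc Γ r r' w →
        ∃ v, InV N n cs Nc Γinv r r' v ∧
          Set.EqOn v
            (fun z => Matrix.vecMul
              (Cm N n cs r' (fun ζ => Matrix.vecMul (w ζ)
                (Dlocinv N n cs r' Nc ζ * Γinv ζ * Rinv ζ)) z)
              (R z))
            (ExtOf n cs r') ∧
          Set.EqOn w (Gmap N n cs Nc Γ r' v) (ExtOf n cs r') := by
    intro R Rinv hR w hw
    have D := isDressing_iff.1 hR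
    obtain ⟨q, hq, hwq, H, hH, he⟩ := (hW w).1 hw
    obtain ⟨u, hu, hue, hv, hve, H', hH', he'⟩ := D.inverse g L hq hH he
    refine ⟨fun z => Matrix.vecMul (u z) (R z),
      (hV _).2 ⟨_, hv, fun _ _ => rfl, H', hH', he'⟩, fun z hz => ?_, fun z hz => ?_⟩
    · have h1 : Set.EqOn (Cm N n cs r' (fun ζ => Matrix.vecMul (w ζ)
          (Dlocinv N n cs r' Nc ζ * Γinv ζ * Rinv ζ))) u (ExtOf n cs r') := by
        refine Cm_eq g g.pos' (fun _ => le_rfl) hu (fun i z hz hne => ?_) hue fun i ζ hζ => ?_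
        · exact (hq.an g hz hne).vecMul ((L.ian i z hz hne).mul (D.ian z (g.punct hz hne)))
        · have h2 := Sinv_eq (Nc := Nc) (Γinv := Γinv) g i ζ (Metric.sphere_subset_closedBall hζ)
          rw [Sinv] at h2
          rw [hwq (g.sphere hζ), h2]
      simp only [h1 hz]
    · rw [hwq (g.ext_mono hz)]
      exact (hG hv (fun _ _ => rfl) hq hve hz).symm
  refine ⟨fun v hv => ?_, ⟨?_, ?_⟩, part3⟩
  · obtain ⟨p, hp, hvp, H, hH, he⟩ := (hV v).1 hv
    obtain ⟨q, hq, hqe, H', hH', he'⟩ := part_one g L hp hH he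
    exact ⟨q, (hW q).2 ⟨q, hq, fun _ _ => rfl, H', hH', he'⟩, (hG hp hvp hq hqe).symm⟩
  · rintro ⟨R, Rinv, hR⟩
    refine ⟨fun v₁ v₂ h₁ h₂ heq => ?_, fun w hw => ?_⟩
    · obtain ⟨p₁, hp₁, hvp₁, H₁, hH₁, he₁⟩ := (hV v₁).1 h₁
      obtain ⟨p₂, hp₂, hvp₂, H₂, hH₂, he₂⟩ := (hV v₂).1 h₂
      obtain ⟨q₁, hq₁, hqe₁, -⟩ := part_one g L hp₁ hH₁ he₁
      obtain ⟨q₂, hq₂, hqe₂, -⟩ := part_one g L hp₂ hH₂ he₂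
      have hqq := hq₁.ident hq₂ fun z hz => ((hG hp₁ hvp₁ hq₁ hqe₁ hz).symm.trans (heq hz)).trans
        (hG hp₂ hvp₂ hq₂ hqe₂ hz)
      have h0 := (isDressing_iff.1 hR).inj g L (hp₁.sub hp₂) fun i =>
        VIn.congr_ball (g.pos' i) ((hqe₁ i).sub (hqe₂ i)) fun z hz hne => by
          rw [hqq z (g.punct hz hne), Matrix.sub_vecMul]
          abel
      intro z hz
      rw [hvp₁ hz, hvp₂ hz]
      exact sub_eq_zero.1 (h0 z (g.ext_notMem hz))
    · obtain ⟨v, hv, -, h⟩ := part3 R Rinv hR w hw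
      exact ⟨v, hv, h⟩
  · rintro ⟨-, hsurj⟩
    obtain ⟨R, Rinv, D⟩ := exists_dressing g L htr (hdet g hΓi' hm) (by
      intro q hq H hH he
      obtain ⟨v, hv, hqv⟩ := hsurj q ((hW q).2 ⟨q, hq, fun _ _ => rfl, H, hH, he⟩)
      obtain ⟨p, hp, hvp, H₁, hH₁, he₁⟩ := (hV v).1 hv
      obtain ⟨q₁, hq₁, hqe₁, -⟩ := part_one g L hp hH₁ he₁
      have hqq := hq.ident hq₁ fun z hz => (hqv hz).trans (hG hp hvp hq₁ hqe₁ hz)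
      exact ⟨p, hp, fun i => VIn.congr_ball (g.pos' i) (hqe₁ i) fun z hz hne => by
        rw [hqq z (g.punct hz hne)]⟩)
    exact ⟨R, Rinv, isDressing_iff.2 D⟩

end
end

section
/- Pointwise trace identity underlying the transformation of the tau differential under conjugation of the jump by a diagonal rational matrix: with Γ₊ := Γ₋M, Γ̃₋ := RΓ₋D, Γ̃₊ := RΓ₊D and M̃ := D^{-1}MD, one has at every point (z,t): Tr(Γ̃₋^{-1}Γ̃₋′ · ∂M̃ · M̃^{-1}) = Tr(Γ₋^{-1}Γ₋′ · ∂M · M^{-1}) + Tr( R^{-1}R′ · [ ∂(Γ₊D)·D^{-1}Γ₊^{-1} − ∂(Γ₋D)·D^{-1}Γ₋^{-1} ] ) + Tr(Γ₊^{-1}Γ₊′ · ∂D·D^{-1}) − Tr(Γ₋^{-1}Γ₋′ · ∂D·D^{-1}) − Tr(M^{-1}M′ · ∂D·D^{-1}) + Tr( D^{-1}D′ · ( ∂M·M^{-1} − ∂D·D^{-1} + M·D^{-1}∂D·M^{-1} ) ). -/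
/-!
The identity is matrix algebra at a fixed point, once `D⁻¹` commutes with `D′` and `∂D`.  With
`A = Γ₋⁻¹Γ₋′`, `B = R⁻¹R′`, `C = D⁻¹D′`, `E = ∂D·D⁻¹` and `Y = ∂M·M⁻¹`,
`Γ̃₋⁻¹Γ̃₋′ = D⁻¹(Γ₋⁻¹BΓ₋ + A + C)D` and `∂M̃·M̃⁻¹ = D⁻¹(Y − E + MEM⁻¹)D`, so the left side is
`Tr((Γ₋⁻¹BΓ₋ + A + C)(Y − E + MEM⁻¹))`, and cyclicity of the trace turns its expansion into the
right side.  Diagonality enters only through the commutation of `D⁻¹` with `D′` and `∂D`: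
`D` vanishes off the diagonal near the point, so its derivatives are diagonal
(`isDiag_of_hasDerivAt`) and hence commute with `D⁻¹` (`inv_mul_comm_of_isDiag`).
The algebra is `trace_identity_of_commute`.
-/

noncomputable section

open Matrix

theorem isDiag_of_hasDerivAt {𝕜 : Type*} [NontriviallyNormedField 𝕜] [NormedSpace 𝕜 ℂ] {N : ℕ}
    {F : 𝕜 → Mat N} {F' : Mat N} {x : 𝕜} {S : Set 𝕜} (hS : S ∈ nhds x)
    (hF : ∀ y ∈ S, (F y).IsDiag)
    (h : ∀ i j : Fin N, HasDerivAt (fun y => F y i j) (F' i j) x) : F'.IsDiag := by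
  intro i j hij
  refine (h i j).unique ((hasDerivAt_const x (0 : ℂ)).congr_of_eventuallyEq ?_)
  filter_upwards [hS] with y hy using hF y hy hij

theorem inv_mul_comm_of_isDiag {N : ℕ} {d di x : Mat N} (hd : d.IsDiag) (hx : x.IsDiag)
    (h1 : d * di = 1) (h2 : di * d = 1) : di * x = x * di := by
  have hc : d * x = x * d := by
    rw [← hd.diagonal_diag, ← hx.diagonal_diag, diagonal_mul_diagonal, diagonal_mul_diagonal]
    simp only [mul_comm]
  calc di * x = di * (x * d) * di := by simp only [mul_assoc, h1, mul_one]
    _ = x * di := by rw [← hc, ← mul_assoc, h2, one_mul]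

/-- The trace identity at a single point, for arbitrary matrices in place of the derivatives,
using only the inverse relations and that `d⁻¹` commutes with the two derivatives of `d`. -/
theorem trace_identity_of_commute {N : ℕ}
    {g gi g' dg m mi m' dm r ri r' d di d' dd : Mat N}
    (hg' : gi * g = 1) (hm : m * mi = 1) (hr : ri * r = 1)
    (hd : d * di = 1) (hd' : di * d = 1)
    (hcd' : di * d' = d' * di) (hcdd : di * dd = dd * di) :
    Matrix.trace ((di * gi * ri) * (r' * g * d + r * g' * d + r * g * d')
        * (-(di * dd * di) * m * d + di * dm * d + di * m * dd) * (di * mi * d))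
      = Matrix.trace ((gi * g') * (dm * mi))
        + Matrix.trace ((ri * r') *
            (((dg * m + g * dm) * d + (g * m) * dd) * di * (mi * gi)
              - (dg * d + g * dd) * di * gi))
        + Matrix.trace (((mi * gi) * (g' * m + g * m')) * (dd * di))
        - Matrix.trace ((gi * g') * (dd * di))
        - Matrix.trace ((mi * m') * (dd * di))
        + Matrix.trace ((di * d') * (dm * mi - dd * di + m * di * dd * mi)) := by
  have cancel : ∀ {a b : Mat N}, a * b = 1 → ∀ x, a * (b * x) = x := fun h x => by
    rw [← mul_assoc, h, one_mul]
  have key1 : (di * gi * ri) * (r' * g * d + r * g' * d + r * g * d')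
      = di * (gi * (ri * r') * g + gi * g' + di * d') * d := by
    rw [hcd']
    simp only [mul_add, add_mul, mul_assoc, cancel hr, cancel hg', hd', mul_one]
  have key2 : (-(di * dd * di) * m * d + di * dm * d + di * m * dd) * (di * mi * d)
      = di * (dm * mi - dd * di + m * (dd * di) * mi) * d := by
    simp only [mul_add, add_mul, mul_sub, sub_mul, neg_mul, mul_assoc, cancel hd, cancel hm]
    abel
  have key3 : ((dg * m + g * dm) * d + (g * m) * dd) * di * (mi * gi)
        - (dg * d + g * dd) * di * gi
      = g * (dm * mi - dd * di + m * (dd * di) * mi) * gi := by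
    simp only [mul_add, add_mul, mul_sub, sub_mul, mul_assoc, cancel hd, cancel hm]
    abel
  have key4 : (mi * gi) * (g' * m + g * m') = mi * (gi * g') * m + mi * m' := by
    simp only [mul_add, mul_assoc, cancel hg']
  have key5 : m * di * dd * mi = m * (dd * di) * mi := by
    rw [mul_assoc m, hcdd]
  rw [mul_assoc _ _ (di * mi * d), key1, key2, key3, key4, key5]
  generalize gi * g' = A
  generalize ri * r' = B
  generalize di * d' = C
  generalize dm * mi = Y
  generalize dd * di = E
  have conj : ∀ P Q : Mat N, Matrix.trace (di * P * d * (di * Q * d)) = Matrix.trace (P * Q) := by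
    intro P Q
    rw [trace_mul_comm]
    simp only [mul_assoc, cancel hd]
    rw [trace_mul_comm]
    simp only [mul_assoc, hd, mul_one]
    rw [trace_mul_comm]
  have cycB : ∀ W : Mat N, Matrix.trace (gi * B * g * W) = Matrix.trace (B * (g * W * gi)) := by
    intro W
    rw [mul_assoc, mul_assoc, trace_mul_comm]
    simp only [mul_assoc]
  have cycA : Matrix.trace (mi * A * m * E) = Matrix.trace (A * (m * E * mi)) := by
    rw [mul_assoc, mul_assoc, trace_mul_comm]
    simp only [mul_assoc]
  rw [conj, add_mul, add_mul, trace_add, trace_add, cycB, add_mul, trace_add, cycA,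
    mul_add A, mul_sub A, trace_add, trace_sub]
  ring

/-- **Pointwise trace identity underlying the transformation of the tau differential
under conjugation of the jump by a diagonal rational matrix.**  With
`Γ₊ := Γ₋M`, `Γ̃₋ := RΓ₋D`, `Γ̃₊ := RΓ₊D` and `M̃ := D⁻¹MD`, at every point
`(z,t) ∈ U × I`:
`Tr(Γ̃₋⁻¹Γ̃₋′·∂M̃·M̃⁻¹) = Tr(Γ₋⁻¹Γ₋′·∂M·M⁻¹)
  + Tr(R⁻¹R′·[∂(Γ₊D)·D⁻¹Γ₊⁻¹ − ∂(Γ₋D)·D⁻¹Γ₋⁻¹])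
  + Tr(Γ₊⁻¹Γ₊′·∂D·D⁻¹) − Tr(Γ₋⁻¹Γ₋′·∂D·D⁻¹) − Tr(M⁻¹M′·∂D·D⁻¹)
  + Tr(D⁻¹D′·(∂M·M⁻¹ − ∂D·D⁻¹ + M·D⁻¹∂D·M⁻¹))`.
Here `F′` is the `z`-derivative, `∂F` the `t`-derivative, all the composite
quantities being expanded by the Leibniz rule (in particular
`Γ₊′ = Γ₋′M + Γ₋M′`, `∂Γ₊ = ∂Γ₋·M + Γ₋·∂M`, `Γ̃₋′ = R′Γ₋D + RΓ₋′D + RΓ₋D′`,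
`∂M̃ = −D⁻¹∂D·D⁻¹MD + D⁻¹∂M·D + D⁻¹M∂D`, `M̃⁻¹ = D⁻¹M⁻¹D`,
`Γ̃₋⁻¹ = D⁻¹Γ₋⁻¹R⁻¹`, `Γ₊⁻¹ = M⁻¹Γ₋⁻¹`, `∂(Γ₊D) = ∂Γ₊·D + Γ₊·∂D`). -/
theorem tau_differential_trace_identity {N : ℕ} (hN : 1 ≤ N)
    (U : Set ℂ) (hU : IsOpen U) (a b : ℝ)
    (Γm Γminv Γm' dΓm M Minv M' dM R Rinv R' dR D Dinv D' dD : ℂ → ℝ → Mat N)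
    (hDdiag : ∀ z ∈ U, ∀ t ∈ Set.Ioo a b, (D z t).IsDiag)
    (hΓminv : ∀ z ∈ U, ∀ t ∈ Set.Ioo a b,
      Γm z t * Γminv z t = 1 ∧ Γminv z t * Γm z t = 1)
    (hMinv : ∀ z ∈ U, ∀ t ∈ Set.Ioo a b, M z t * Minv z t = 1 ∧ Minv z t * M z t = 1)
    (hRinv : ∀ z ∈ U, ∀ t ∈ Set.Ioo a b, R z t * Rinv z t = 1 ∧ Rinv z t * R z t = 1)
    (hDinv : ∀ z ∈ U, ∀ t ∈ Set.Ioo a b, D z t * Dinv z t = 1 ∧ Dinv z t * D z t = 1)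
    (hΓm' : ∀ z ∈ U, ∀ t ∈ Set.Ioo a b, ∀ i j : Fin N,
      HasDerivAt (fun w => Γm w t i j) (Γm' z t i j) z)
    (hdΓm : ∀ z ∈ U, ∀ t ∈ Set.Ioo a b, ∀ i j : Fin N,
      HasDerivAt (fun s => Γm z s i j) (dΓm z t i j) t)
    (hM' : ∀ z ∈ U, ∀ t ∈ Set.Ioo a b, ∀ i j : Fin N,
      HasDerivAt (fun w => M w t i j) (M' z t i j) z)
    (hdM : ∀ z ∈ U, ∀ t ∈ Set.Ioo a b, ∀ i j : Fin N,
      HasDerivAt (fun s => M z s i j) (dM z t i j) t)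
    (hR' : ∀ z ∈ U, ∀ t ∈ Set.Ioo a b, ∀ i j : Fin N,
      HasDerivAt (fun w => R w t i j) (R' z t i j) z)
    (hdR : ∀ z ∈ U, ∀ t ∈ Set.Ioo a b, ∀ i j : Fin N,
      HasDerivAt (fun s => R z s i j) (dR z t i j) t)
    (hD' : ∀ z ∈ U, ∀ t ∈ Set.Ioo a b, ∀ i j : Fin N,
      HasDerivAt (fun w => D w t i j) (D' z t i j) z)
    (hdD : ∀ z ∈ U, ∀ t ∈ Set.Ioo a b, ∀ i j : Fin N,
      HasDerivAt (fun s => D z s i j) (dD z t i j) t) :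
    ∀ z ∈ U, ∀ t ∈ Set.Ioo a b,
      -- abbreviations (values at the point (z,t))
      (fun g gi g' dg m mi m' dm r ri r' d di d' dd =>
        -- Γ₊ and its derivatives / inverse
        (fun gp gpi gp' dgp =>
          -- the transformed quantities
          Matrix.trace ((di * gi * ri) * (r' * g * d + r * g' * d + r * g * d')
              * (-(di * dd * di) * m * d + di * dm * d + di * m * dd) * (di * mi * d))
            = Matrix.trace ((gi * g') * (dm * mi))
              + Matrix.trace ((ri * r') *
                  ((dgp * d + gp * dd) * di * gpi - (dg * d + g * dd) * di * gi))
              + Matrix.trace ((gpi * gp') * (dd * di))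
              - Matrix.trace ((gi * g') * (dd * di))
              - Matrix.trace ((mi * m') * (dd * di))
              + Matrix.trace ((di * d') * (dm * mi - dd * di + m * di * dd * mi)))
          (g * m) (mi * gi) (g' * m + g * m') (dg * m + g * dm))
        (Γm z t) (Γminv z t) (Γm' z t) (dΓm z t) (M z t) (Minv z t) (M' z t) (dM z t)
        (R z t) (Rinv z t) (R' z t) (D z t) (Dinv z t) (D' z t) (dD z t) := by
  intro z hz t ht
  have hUz : U ∈ nhds z := hU.mem_nhds hz
  have hIt : Set.Ioo a b ∈ nhds t := isOpen_Ioo.mem_nhds ht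
  have hD'diag : (D' z t).IsDiag :=
    isDiag_of_hasDerivAt hUz (fun w hw => hDdiag w hw t ht) (hD' z hz t ht)
  have hdDdiag : (dD z t).IsDiag :=
    isDiag_of_hasDerivAt hIt (fun s hs => hDdiag z hz s hs) (hdD z hz t ht)
  obtain ⟨hd, hd'⟩ := hDinv z hz t ht
  exact trace_identity_of_commute (hΓminv z hz t ht).2
    (hMinv z hz t ht).1 (hRinv z hz t ht).2 hd hd'
    (inv_mul_comm_of_isDiag (hDdiag z hz t ht) hD'diag hd hd')
    (inv_mul_comm_of_isDiag (hDdiag z hz t ht) hdDdiag hd hd')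

end
end

section
/- Residue evaluation for the discrepancy between the globally and locally defined diagonal dressings: for any two distinct points c₀, c ∈ 𝒞, res_{z=c} [ Tr( R(z)^{-1}R′(z) · Γ(z) N_{c₀} Γ(z)^{-1} ) / (z − c₀) ] dz = − Tr(N_c N_{c₀}) / (c − c₀). -/
/-!
Near `c` write `D = diag ((z - c) ^ n_c)`, `H = R Γ D` and `M = diag n_{c₀}`. Taking the logarithmic
derivative of `H` and using that the diagonal matrices `M` and `D` commute gives
`Tr (R⁻¹ R' Γ M Γ⁻¹) = Tr (H⁻¹ H' M) - Tr (Γ⁻¹ Γ' M) - Tr (n_c M) / (z - c)`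
(`trace_log_deriv`). Both `H⁻¹ H'` and `Γ⁻¹ Γ'` stay bounded at `c`, so `z - c` times the integrand
tends to `- Tr (n_c M) / (c - c₀)`. As the integrand is holomorphic on the punctured closed disc,
Cauchy's formula with a removable centre identifies the circle integral with `2πi` times this limit.
-/

noncomputable section

/-- The residue at a finite point `p`, computed as `(2πi)⁻¹ ∮` over the
counterclockwise circle of radius `r` around `p`. -/
def resCircle (p : ℂ) (r : ℝ) (f : ℂ → ℂ) : ℂ :=
  (2 * (Real.pi : ℂ) * Complex.I)⁻¹ * (∮ z in C(p, r), f z)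

/-! ### Calculus of matrix-valued functions, entrywise -/

/-- Leibniz rule for matrix products, with derivatives taken entrywise so that no matrix norm has to
be chosen. -/
theorem hasDerivAt_matrix_mul {N : ℕ} {A B : ℂ → Mat N} {A' B' : Mat N} {z : ℂ}
    (hA : ∀ i j, HasDerivAt (fun w => A w i j) (A' i j) z)
    (hB : ∀ i j, HasDerivAt (fun w => B w i j) (B' i j) z) (i j : Fin N) :
    HasDerivAt (fun w => (A w * B w) i j) ((A' * B z + A z * B') i j) z := by
  simp only [Matrix.mul_apply, Matrix.add_apply, ← Finset.sum_add_distrib]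
  exact HasDerivAt.fun_sum fun k _ => (hA i k).mul (hB k j)

theorem differentiableAt_matrix_mul {N : ℕ} {A B : ℂ → Mat N} {z : ℂ}
    (hA : ∀ i j, DifferentiableAt ℂ (fun w => A w i j) z)
    (hB : ∀ i j, DifferentiableAt ℂ (fun w => B w i j) z) (i j : Fin N) :
    DifferentiableAt ℂ (fun w => (A w * B w) i j) z :=
  (hasDerivAt_matrix_mul (A' := .of fun i j => deriv (fun w => A w i j) z)
    (B' := .of fun i j => deriv (fun w => B w i j) z)
    (fun i j => (hA i j).hasDerivAt) (fun i j => (hB i j).hasDerivAt) i j).differentiableAt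

theorem hasDerivAt_diagonal_zpow {N : ℕ} (m : Fin N → ℤ) {c z : ℂ} (hz : z ≠ c) (i j : Fin N) :
    HasDerivAt (fun w => (Matrix.diagonal (fun μ => (w - c) ^ m μ) : Mat N) i j)
      (((Matrix.diagonal (fun μ => (z - c) ^ m μ) : Mat N) *
        Matrix.diagonal (fun μ => (m μ : ℂ) / (z - c))) i j) z := by
  have hz' : z - c ≠ 0 := sub_ne_zero.2 hz
  rw [Matrix.diagonal_mul_diagonal]
  by_cases hij : i = j
  · subst hij
    simp only [Matrix.diagonal_apply_eq]
    have h := (hasDerivAt_zpow (m i) (z - c) (Or.inl hz')).comp z ((hasDerivAt_id z).sub_const c)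
    refine h.congr_deriv ?_
    rw [zpow_sub_one₀ hz']
    field_simp
  · simp only [Matrix.diagonal_apply_ne _ hij]
    exact hasDerivAt_const z 0

/-! ### The logarithmic derivative of the dressed function -/

/-- The trace of the logarithmic derivative of `R Γ D` against a matrix `M` commuting with `D`;
`G` and `G'` play the roles of `Γ` and `Γ'`, and `D L` that of `D'`. -/
theorem trace_log_deriv {N : ℕ} {R Ri R' G Gi G' D Di L M : Mat N}
    (hR : Ri * R = 1) (hG : Gi * G = 1) (hD : D * Di = 1) (hD' : Di * D = 1)
    (hDM : D * M = M * D) :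
    Matrix.trace (Di * Gi * Ri * ((R' * G + R * G') * D + R * G * (D * L)) * M)
      = Matrix.trace (Ri * R' * G * M * Gi) + Matrix.trace (Gi * G' * M)
        + Matrix.trace (L * M) := by
  have conj : ∀ X : Mat N, Matrix.trace (Di * X * D * M) = Matrix.trace (X * M) := by
    intro X
    rw [mul_assoc (Di * X), hDM, mul_assoc Di X, Matrix.trace_mul_comm]
    simp only [mul_assoc]
    rw [hD, mul_one]
  have e : Di * Gi * Ri * ((R' * G + R * G') * D + R * G * (D * L)) * M
      = Di * (Gi * Ri * R' * G) * D * M + Di * (Gi * (Ri * R) * G') * D * M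
        + Di * (Gi * (Ri * R) * G) * D * L * M := by
    noncomm_ring
  rw [e, hR, mul_one, hG, mul_one, hD', one_mul, Matrix.trace_add, Matrix.trace_add, conj, conj]
  congr 2
  rw [Matrix.trace_mul_comm (Ri * R' * G * M)]
  simp only [mul_assoc]

/-! ### Evaluation of the residue -/

open Filter Topology

/-- **Residue evaluation for the discrepancy between the globally and locally
defined diagonal dressings.**  For distinct points `c₀ ≠ c` of `𝒞`,
`res_{z=c} [ Tr( R(z)⁻¹R′(z)·Γ(z)N_{c₀}Γ(z)⁻¹ ) / (z − c₀) ] dz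
  = − Tr(N_c N_{c₀}) / (c − c₀)`,
where `N_p` is the diagonal integer matrix `diag(n p)`, `Γ, Γ⁻¹` are analytic
near each point of `𝒞`, `R, R⁻¹` are analytic on punctured neighborhoods of the
points of `𝒞` and `R(z)Γ(z)(z−p)^{N_p}` together with its inverse extends
analytically to each `p ∈ 𝒞`. -/
theorem dressing_discrepancy_residue {N : ℕ} (hN : 1 ≤ N)
    (𝒞 : Finset ℂ) (n : ℂ → Fin N → ℤ)
    (Γ Γinv R Rinv R' : ℂ → Mat N)
    (ε : ℂ → ℝ) (hε : ∀ p ∈ 𝒞, 0 < ε p)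
    (hΓ : ∀ p ∈ 𝒞, ∀ i j : Fin N,
      AnalyticOnNhd ℂ (fun z => Γ z i j) (Metric.ball p (ε p)))
    (hΓinv : ∀ p ∈ 𝒞, ∀ i j : Fin N,
      AnalyticOnNhd ℂ (fun z => Γinv z i j) (Metric.ball p (ε p)))
    (hΓmul : ∀ p ∈ 𝒞, ∀ z ∈ Metric.ball p (ε p), Γ z * Γinv z = 1 ∧ Γinv z * Γ z = 1)
    (hR : ∀ p ∈ 𝒞, ∀ i j : Fin N,
      AnalyticOnNhd ℂ (fun z => R z i j) (Metric.ball p (ε p) \ {p}))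
    (hRinv : ∀ p ∈ 𝒞, ∀ i j : Fin N,
      AnalyticOnNhd ℂ (fun z => Rinv z i j) (Metric.ball p (ε p) \ {p}))
    (hRmul : ∀ p ∈ 𝒞, ∀ z ∈ Metric.ball p (ε p) \ {p}, R z * Rinv z = 1 ∧ Rinv z * R z = 1)
    (hR' : ∀ p ∈ 𝒞, ∀ z ∈ Metric.ball p (ε p) \ {p}, ∀ i j : Fin N,
      HasDerivAt (fun w => R w i j) (R' z i j) z)
    (hext : ∀ p ∈ 𝒞, ∀ i j : Fin N,
      ExtAt (fun z => (R z * Γ z * Matrix.diagonal (fun μ => (z - p) ^ (n p μ))) i j) p)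
    (hextinv : ∀ p ∈ 𝒞, ∀ i j : Fin N,
      ExtAt (fun z =>
        (Matrix.diagonal (fun μ => (z - p) ^ (-(n p μ))) * Γinv z * Rinv z) i j) p)
    (c₀ c : ℂ) (hc₀ : c₀ ∈ 𝒞) (hc : c ∈ 𝒞) (hne : c ≠ c₀)
    (ρ : ℝ) (hρ : 0 < ρ) (hρε : ρ < ε c) (hρc₀ : ρ < dist c c₀)
    (hρsep : ∀ p ∈ 𝒞, p ≠ c → ρ < dist c p) :
    resCircle c ρ (fun z =>
        Matrix.trace (Rinv z * R' z * Γ z *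
          Matrix.diagonal (fun μ => (n c₀ μ : ℂ)) * Γinv z) / (z - c₀))
      = -((∑ μ : Fin N, ((n c μ * n c₀ μ : ℤ) : ℂ)) / (c - c₀)) := by
  set B := Metric.ball c (ε c) with hB
  set M : Mat N := Matrix.diagonal (fun μ => (n c₀ μ : ℂ)) with hM
  set S : ℂ := ∑ μ : Fin N, ((n c μ * n c₀ μ : ℤ) : ℂ) with hS
  set f : ℂ → ℂ := fun z => Matrix.trace (Rinv z * R' z * Γ z * M * Γinv z) / (z - c₀) with hf
  have hopen : IsOpen (B \ {c}) := Metric.isOpen_ball.sdiff isClosed_singleton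
  have hfd : ∀ z ∈ B \ {c}, z ≠ c₀ → DifferentiableAt ℂ f z := by
    intro z hz hz0
    have hR'd : ∀ i j, DifferentiableAt ℂ (fun w => R' w i j) z := by
      intro i j
      refine ((hR c hc i j z hz).deriv.differentiableAt).congr_of_eventuallyEq ?_
      filter_upwards [hopen.mem_nhds hz] with w hw
      exact (hR' c hc w hw i j).deriv.symm
    have hΓd i j := (hΓ c hc i j z hz.1).differentiableAt
    have hΓid i j := (hΓinv c hc i j z hz.1).differentiableAt
    have hRid i j := (hRinv c hc i j z hz).differentiableAt
    have hprod := differentiableAt_matrix_mul (differentiableAt_matrix_mul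
      (differentiableAt_matrix_mul (differentiableAt_matrix_mul hRid hR'd) hΓd)
      (B := fun _ => M) (fun i j => differentiableAt_const _)) hΓid
    have htr : DifferentiableAt ℂ
        (fun w => Matrix.trace (Rinv w * R' w * Γ w * M * Γinv w)) z :=
      DifferentiableAt.fun_sum fun i _ => hprod i i
    exact htr.div (differentiableAt_id.sub_const c₀) (sub_ne_zero.2 hz0)
  have hsub : ∀ z ∈ Metric.closedBall c ρ, z ∈ B ∧ z ≠ c₀ := by
    intro z hz
    refine ⟨Metric.closedBall_subset_ball hρε hz, ?_⟩
    rintro rfl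
    rw [Metric.mem_closedBall, dist_comm] at hz
    linarith
  have hBc : B ∈ 𝓝 c := Metric.ball_mem_nhds c (hε c hc)
  have hcB : c ∈ B := Metric.mem_ball_self (hε c hc)
  -- `h` and `k` are the analytic extensions to `c` of `R Γ D` and of its inverse.
  choose h hh hhe using hext c hc
  choose k hk hke using hextinv c hc
  let H' : ℂ → Mat N := fun z => .of fun i j => deriv (h i j) z
  let K : ℂ → Mat N := fun z => .of fun i j => k i j z
  let Γ' : ℂ → Mat N := fun z => .of fun i j => deriv (fun w => Γ w i j) z
  have key : ∀ᶠ z in 𝓝[≠] c, (z - c) * f z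
      = (((z - c) * (Matrix.trace (K z * H' z * M) - Matrix.trace (Γinv z * Γ' z * M))) - S)
        / (z - c₀) := by
    -- The derivative of `h` at `z` requires the equality on a neighbourhood of `z`, for `z` near `c`.
    have hhe' : ∀ᶠ z in 𝓝[≠] c, ∀ᶠ w in 𝓝[{c}ᶜ] z, ∀ i j, h i j w
        = (R w * Γ w * Matrix.diagonal (fun μ => (w - c) ^ (n c μ))) i j :=
      eventually_eventually_nhdsWithin.2
        (eventually_all.2 fun i => eventually_all.2 fun j => hhe i j)
    have hke' := eventually_all.2 fun i => eventually_all.2 fun j => hke i j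
    filter_upwards [hhe', hke', nhdsWithin_le_nhds hBc, nhdsWithin_le_nhds
      (isOpen_ne.mem_nhds hne), self_mem_nhdsWithin] with z h1 h2 h3 h5 h4
    have hzc : z ≠ c := h4
    have hzc' : z - c ≠ 0 := sub_ne_zero.2 hzc
    have hz0 : z - c₀ ≠ 0 := sub_ne_zero.2 h5
    have hz : z ∈ B \ {c} := ⟨h3, h4⟩
    rw [isOpen_compl_singleton.nhdsWithin_eq h4] at h1
    have eK : K z = Matrix.diagonal (fun μ => (z - c) ^ (-(n c μ))) * Γinv z * Rinv z := by
      ext i j; exact h2 i j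
    have eH : H' z = (R' z * Γ z + R z * Γ' z) * Matrix.diagonal (fun μ => (z - c) ^ (n c μ))
        + R z * Γ z * (Matrix.diagonal (fun μ => (z - c) ^ (n c μ)) *
          Matrix.diagonal (fun μ => (n c μ : ℂ) / (z - c))) := by
      ext i j
      have hd := hasDerivAt_matrix_mul (hasDerivAt_matrix_mul (hR' c hc z hz) (B' := Γ' z)
        (fun i j => (hΓ c hc i j z h3).differentiableAt.hasDerivAt))
        (hasDerivAt_diagonal_zpow (n c) hzc) i j
      exact (hd.congr_of_eventuallyEq (h1.mono fun w hw => hw i j)).deriv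
    have hDD : ∀ m : Fin N → ℤ, (Matrix.diagonal (fun μ => (z - c) ^ (m μ)) : Mat N) *
        Matrix.diagonal (fun μ => (z - c) ^ (-(m μ))) = 1 := by
      intro m
      rw [Matrix.diagonal_mul_diagonal, ← Matrix.diagonal_one]
      congr 1; funext μ
      rw [← zpow_add₀ hzc', add_neg_cancel, zpow_zero]
    have hDD' := hDD (fun μ => -(n c μ))
    simp only [neg_neg] at hDD'
    have hDM : (Matrix.diagonal (fun μ => (z - c) ^ (n c μ)) : Mat N) * M
        = M * Matrix.diagonal (fun μ => (z - c) ^ (n c μ)) := by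
      simp only [hM, Matrix.diagonal_mul_diagonal, mul_comm]
    have hLM : Matrix.trace ((Matrix.diagonal (fun μ => (n c μ : ℂ) / (z - c)) : Mat N) * M)
        = S / (z - c) := by
      rw [hM, Matrix.diagonal_mul_diagonal, Matrix.trace_diagonal, hS, Finset.sum_div]
      refine Finset.sum_congr rfl fun μ _ => ?_
      push_cast
      ring
    have tr := trace_log_deriv (R' := R' z) (G' := Γ' z)
      (L := Matrix.diagonal (fun μ => (n c μ : ℂ) / (z - c))) (hRmul c hc z hz).2
      (hΓmul c hc z h3).2 (hDD (n c)) hDD' hDM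
    rw [← eK, ← eH, hLM] at tr
    rw [tr]
    simp only [hf]
    field_simp
    ring
  have hKc : ContinuousAt K c :=
    continuousAt_pi.2 fun i => continuousAt_pi.2 fun j => (hk i j).continuousAt
  have hHc : ContinuousAt H' c :=
    continuousAt_pi.2 fun i => continuousAt_pi.2 fun j => (hh i j).deriv.continuousAt
  have hΓc : ContinuousAt Γ' c :=
    continuousAt_pi.2 fun i => continuousAt_pi.2 fun j =>
      (hΓ c hc i j c hcB).deriv.continuousAt
  have hΓic : ContinuousAt Γinv c :=
    continuousAt_pi.2 fun i => continuousAt_pi.2 fun j =>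
      (hΓinv c hc i j c hcB).continuousAt
  have hMt : Continuous fun X : Mat N => Matrix.trace (X * M) :=
    (continuous_id.matrix_mul continuous_const).matrix_trace
  have hlim : Tendsto (fun z => (z - c) * f z) (𝓝[≠] c) (𝓝 (-(S / (c - c₀)))) := by
    have hcont : ContinuousAt (fun z =>
        (((z - c) * (Matrix.trace (K z * H' z * M) - Matrix.trace (Γinv z * Γ' z * M))) - S)
          / (z - c₀)) c := by
      have h1 : ContinuousAt (fun z => Matrix.trace (K z * H' z * M)) c :=
        ContinuousAt.comp (f := fun z => K z * H' z) hMt.continuousAt (hKc.mul hHc)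
      have h2 : ContinuousAt (fun z => Matrix.trace (Γinv z * Γ' z * M)) c :=
        ContinuousAt.comp (f := fun z => Γinv z * Γ' z) hMt.continuousAt (hΓic.mul hΓc)
      exact ((((continuousAt_id.sub continuousAt_const).mul (h1.sub h2)).sub
        continuousAt_const).div (continuousAt_id.sub continuousAt_const) (sub_ne_zero.2 hne))
    have ht := hcont.tendsto.mono_left (nhdsWithin_le_nhds (s := {c}ᶜ))
    rw [sub_self, zero_mul, zero_sub, neg_div] at ht
    exact ht.congr' (key.mono fun z hz => hz.symm)
  have hgd : ∀ z ∈ Metric.closedBall c ρ \ {c},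
      DifferentiableAt ℂ (fun z => (z - c) * f z) z := fun z hz =>
    (differentiableAt_id.sub_const c).mul (hfd z ⟨(hsub z hz.1).1, hz.2⟩ (hsub z hz.1).2)
  have hcauchy :=
    Complex.circleIntegral_sub_center_inv_smul_of_differentiable_on_off_countable_of_tendsto
      hρ Set.countable_empty (fun z hz => (hgd z hz).continuousAt.continuousWithinAt)
      (fun z hz => hgd z ⟨Metric.ball_subset_closedBall hz.1.1, hz.1.2⟩) hlim
  have hcongr : (∮ z in C(c, ρ), f z) = ∮ z in C(c, ρ), (z - c)⁻¹ • ((z - c) * f z) := by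
    refine circleIntegral.integral_congr hρ.le fun z hz => ?_
    have hzc : z - c ≠ 0 := sub_ne_zero.2 (Metric.ne_of_mem_sphere hz hρ.ne')
    simp [hzc]
  rw [resCircle, hcongr, hcauchy, smul_eq_mul, inv_mul_cancel_left₀ Complex.two_pi_I_ne_zero]

end
end
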